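/- For every ε > 0 there exist positive constants δ and C such that if C n^{-1/2} ≤ p(n) ≤ n^{-1/3}, then G(n,p) asymptotically almost surely satisfies the following: every subgraph G' of G(n,p) with more than (1/2 + ε)·e(G(n,p)) edges satisfies the property P_δ, i.e., for every labeling of the vertices of G' with ℤ_n and every integer l with 0 ≤ l ≤ δn, G' contains an l-shortcut. -/

import Mathlib

/-!
The constant `C = 1` works, with `δ = 1 / N` for some `N` of order `1 / min ε 1`.

*Deterministic core* (`exists_rectWeight_excess`). Let `f` be a nonnegative weight on pairs of
points of the circle, with average above `1/2`, no rectangle much denser than average `1`, and a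
bounded second moment of codegrees. A linear number of points `x` in a short arc have row averages
at `x` and `x + 1` above constants `a`, `b` with `a + b > 1` (`exists_split_class`). Cut this class
into an initial part, for `i₁`, and a final part, for `i₂`. Since `a + b > 1`, the rows of `i₁` and
`i₂ + 1` overlap on average, and the second moment spreads the overlap, so that many `i₂` have
linearly many partners `i₁`, that is, there is an `i₃` with `{i₁, i₃}` and `{i₂ + 1, i₃ + 1}` in the
support of `f` (`exists_rows_with_partners`). The rows of `i₁ + 1` for these partners reach almost
`b n` points `i₄` (`le_card_closes`), because no rectangle is too dense. Hence for such an `i₂` at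
most about `(1 - b) n` of the pairs `(i₂, i₄ + l + 1)` fail to complete an `l`-shortcut, while the
row of `i₂` has weight at least `a n`. So some rectangle carries a weight exceeding, by a constant
times `n²`, the number of its pairs that complete no shortcut.

*Transfer to sparse random graphs.* Given a subgraph `G'` with more than `1/2 + ε` of the edges of
`G(n,p)`, choose a sparse sample `S` of its edges that still represents all its rectangle counts
(`IsSample.exists_dense_isSample`), and apply the core to the indicator of `S`, scaled. If `G'` has
no `l`-shortcut for some labeling, then all edges of `G'` in the rectangle found lie in the set
`openPairs S` of pairs completing no shortcut with three edges of `S`, and therefore `G(n,p)` has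
too many edges in that set (`IsTypical.exists_closes`). As `openPairs` is determined by `S`, the
labeling, `l` and a rectangle, a union bound over these data and the Chernoff bound show that a.a.s.
this never happens (`bernProb_exists_sparse_le`): a set `S` of at most `η p n²` edges is present
with probability `p ^ |S|`, the resulting entropy `η log (1 / η) p n²` is small against the Chernoff
exponent, and the `n! (n + 1) 4 ^ n` remaining choices are negligible against `exp (-c p n²)` since
`p n² ≥ n ^ (3/2)`. The condition `n p² ≥ 1` bounds the expected number of four-cycles by
`O(p⁴ n⁴)`, which gives the second moment bound through Markov's inequality
(`bernProb_le_codegreeEnergy_le`). It holds only with probability `1 - O(1 / K)`, so it matters that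
neither the excess nor the sample rate `η` depends on `K`.
-/

open Filter Topology Classical

/-- The clockwise arc length from `a` to `b` on the discrete circle `ZMod n`. -/
def arcDist {n : ℕ} (a b : ZMod n) : ℕ := (b - a).val

/-- The points of `L` are all distinct and lie in this clockwise cyclic order
on the discrete circle `ZMod n` (the consecutive clockwise arcs, including the
wrap-around arc, sum to exactly `n`). -/
def InClockwiseOrder {n : ℕ} (L : List (ZMod n)) : Prop :=
  L.Nodup ∧ ((L.zip (L.rotate 1)).map fun q => arcDist q.1 q.2).sum = n

/-- The Hamilton cycle `C_n` on vertex set `ZMod n`, with edges `{i, i+1}`. -/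
def cycleGraph (n : ℕ) : SimpleGraph (ZMod n) :=
  SimpleGraph.fromEdgeSet {e | ∃ i : ZMod n, e = s(i, i + 1)}

/-- The four edges of the `l`-shortcut determined by `i₁ i₂ i₃ i₄`. -/
def shortcutEdges {n : ℕ} (l : ℕ) (i₁ i₂ i₃ i₄ : ZMod n) : Finset (Sym2 (ZMod n)) :=
  {s(i₁, i₃), s(i₁ + 1, i₄), s(i₂, i₄ + (l : ZMod n) + 1), s(i₂ + 1, i₃ + 1)}

/-- `(i₁, i₂, i₃, i₄)` determines an `l`-shortcut (of type (i) or type (ii)) in `K_n ∖ C_n`. -/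
def IsShortcutTuple {n : ℕ} (l : ℕ) (i₁ i₂ i₃ i₄ : ZMod n) : Prop :=
  (InClockwiseOrder [i₁, i₁ + 1, i₂, i₂ + 1, i₃, i₃ + 1, i₄, i₄ + (l : ZMod n) + 1] ∨
   InClockwiseOrder [i₁, i₁ + 1, i₂, i₂ + 1, i₄, i₄ + (l : ZMod n) + 1, i₃, i₃ + 1]) ∧
  ∀ e ∈ shortcutEdges l i₁ i₂ i₃ i₄, e ∉ (cycleGraph n).edgeSet

/-- The edge set `S` is an `l`-shortcut. -/
def IsShortcut {n : ℕ} (l : ℕ) (S : Finset (Sym2 (ZMod n))) : Prop :=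
  ∃ i₁ i₂ i₃ i₄ : ZMod n, IsShortcutTuple l i₁ i₂ i₃ i₄ ∧ S = shortcutEdges l i₁ i₂ i₃ i₄

/-- The number of `l`-shortcuts all of whose edges belong to the edge set `U`. -/
noncomputable def shortcutCountIn {n : ℕ} (l : ℕ) (U : Set (Sym2 (ZMod n))) : ℕ :=
  {S : Finset (Sym2 (ZMod n)) | IsShortcut l S ∧ (S : Set (Sym2 (ZMod n))) ⊆ U}.ncard

/-- `G` contains an `l`-shortcut. -/
def ContainsShortcut {n : ℕ} (l : ℕ) (G : SimpleGraph (ZMod n)) : Prop :=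
  ∃ i₁ i₂ i₃ i₄ : ZMod n, IsShortcutTuple l i₁ i₂ i₃ i₄ ∧
    (shortcutEdges l i₁ i₂ i₃ i₄ : Set (Sym2 (ZMod n))) ⊆ G.edgeSet

/-- `G` contains a cycle of length `t`. -/
def HasCycleLength {V : Type} (G : SimpleGraph V) (t : ℕ) : Prop :=
  ∃ (v : V) (w : G.Walk v v), w.IsCycle ∧ w.length = t

/-- Probability that a graph drawn from the binomial random graph `G(n,p)` on the labeled
vertex set `ZMod n` satisfies the predicate `P` (junk value `0` for `n = 0`). -/
noncomputable def gnpProbZMod (n : ℕ) (p : ℝ) (P : SimpleGraph (ZMod n) → Prop) : ℝ :=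
  if h : n = 0 then 0 else
    letI : NeZero n := ⟨h⟩
    ∑ G : SimpleGraph (ZMod n),
      if P G then p ^ G.edgeSet.ncard * (1 - p) ^ (n.choose 2 - G.edgeSet.ncard) else 0

/-- The property `P_δ`: for every labeling of the vertices with `ZMod n` (i.e. every
relabeling bijection) and every `l` with `0 ≤ l ≤ δn`, the graph contains an `l`-shortcut. -/
def SatisfiesPdelta {n : ℕ} (δ : ℝ) (G : SimpleGraph (ZMod n)) : Prop :=
  ∀ σ : ZMod n ≃ ZMod n, ∀ l : ℕ, (l : ℝ) ≤ δ * n →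
    ContainsShortcut l (G.map σ.toEmbedding)

/-! ### Clockwise order in coordinates -/

section ClockwiseOrder

variable {n : ℕ}

lemma arcDist_add_natCast (s : ZMod n) {a b : ℕ} (hab : a ≤ b) (hb : b < n) :
    arcDist (s + (a : ZMod n)) (s + (b : ZMod n)) = b - a := by
  have : s + (b : ZMod n) - (s + (a : ZMod n)) = ((b - a : ℕ) : ZMod n) := by
    rw [Nat.cast_sub hab]; ring
  rw [arcDist, this, ZMod.val_cast_of_lt (by omega)]

lemma arcDist_add_natCast_of_lt (s : ZMod n) {a b : ℕ} (hab : a < b) (hb : b < n) :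
    arcDist (s + (b : ZMod n)) (s + (a : ZMod n)) = n - (b - a) := by
  have : s + (a : ZMod n) - (s + (b : ZMod n)) = ((n - (b - a) : ℕ) : ZMod n) := by
    rw [Nat.cast_sub (by omega), Nat.cast_sub hab.le, ZMod.natCast_self]; ring
  rw [arcDist, this, ZMod.val_cast_of_lt (by omega)]

lemma add_natCast_injOn (s : ZMod n) : Set.InjOn (fun a : ℕ => s + (a : ZMod n)) (Set.Iio n) := by
  intro a ha b hb hab
  have := congrArg ZMod.val (add_left_cancel hab)
  rwa [ZMod.val_cast_of_lt ha, ZMod.val_cast_of_lt hb] at this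

lemma sum_arcDist_zip (s : ZMod n) {a : ℕ} :
    ∀ {b : ℕ} {l : List ℕ}, (a :: b :: l).Pairwise (· < ·) → (∀ c ∈ b :: l, c < n) →
      (((b :: l).map fun c : ℕ => s + (c : ZMod n)).zip
        ((l.map fun c : ℕ => s + (c : ZMod n)) ++ [s + (a : ZMod n)])
        |>.map fun q => arcDist q.1 q.2).sum = n - (b - a)
  | b, [], h, hn => by
    simp only [List.pairwise_cons, List.mem_cons, List.not_mem_nil, or_false, forall_eq] at h hn
    simpa using arcDist_add_natCast_of_lt s h.1 hn
  | b, c :: l, h, hn => by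
    simp only [List.pairwise_cons, List.mem_cons, forall_eq_or_imp] at h hn
    have ih := sum_arcDist_zip s (a := a) (b := c) (l := l) (by simpa using ⟨h.1.2, h.2.2⟩)
      (by simpa using hn.2)
    simp only [List.map_cons, List.cons_append, List.zip_cons_cons, List.sum_cons] at ih ⊢
    rw [ih, arcDist_add_natCast s h.2.1.1.le hn.2.1]
    omega

lemma inClockwiseOrder_map_add_natCast (s : ZMod n) {a b : ℕ} {l : List ℕ}
    (h : (a :: b :: l).Pairwise (· < ·)) (hn : ∀ c ∈ a :: b :: l, c < n) :
    InClockwiseOrder ((a :: b :: l).map fun c : ℕ => s + (c : ZMod n)) := by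
  refine ⟨List.Nodup.map_on (fun x hx y hy => add_natCast_injOn s (hn x hx) (hn y hy))
    (h.imp ne_of_lt), ?_⟩
  have hsum := sum_arcDist_zip s h fun c hc => hn c (List.mem_cons_of_mem a hc)
  have hab : a < b := by simp_all
  have hb : b < n := hn b (by simp)
  simp only [List.map_cons, List.rotate_cons_succ, List.rotate_zero, List.cons_append,
    List.zip_cons_cons, List.sum_cons] at hsum ⊢
  rw [hsum, arcDist_add_natCast s hab.le hb]
  omega

lemma notMem_edgeSet_cycleGraph [NeZero n] (s : ZMod n) {a b : ℕ} (hab : a + 2 ≤ b) (hb : b < n)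
    (hba : b + 1 < n + a) : s(s + (a : ZMod n), s + (b : ZMod n)) ∉ (cycleGraph n).edgeSet := by
  rw [cycleGraph, SimpleGraph.edgeSet_fromEdgeSet]
  rintro ⟨⟨i, hi⟩, -⟩
  rcases Sym2.eq_iff.1 hi with ⟨ha, hb'⟩ | ⟨ha, hb'⟩
  · have : arcDist (s + (a : ZMod n)) (s + (b : ZMod n)) =
        arcDist (s + (a : ZMod n)) (s + ((a + 1 : ℕ) : ZMod n)) := by
      rw [hb', ← ha]; push_cast; rw [add_assoc]
    rw [arcDist_add_natCast s (by omega) hb, arcDist_add_natCast s (by omega) (by omega)] at this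
    omega
  · have : arcDist (s + (b : ZMod n)) (s + (a : ZMod n)) =
        arcDist (s + (b : ZMod n)) (s + (b : ZMod n) + ((1 : ℕ) : ZMod n)) := by
      rw [ha, ← hb', Nat.cast_one]
    rw [arcDist_add_natCast_of_lt s (by omega) hb, arcDist, add_sub_cancel_left,
      ZMod.val_cast_of_lt (show 1 < n by omega)] at this
    omega

lemma isShortcutTuple_add_natCast [NeZero n] (s : ZMod n) (l j₁ j₂ j₃ j₄ : ℕ) (h₁₂ : j₁ + 2 ≤ j₂)
    (h₂₃ : j₂ + 2 ≤ j₃) (h₂₄ : j₂ + 2 ≤ j₄) (h₃ : j₃ + 1 < n) (h₄ : j₄ + l + 1 < n)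
    (h₃₄ : j₃ + 1 < j₄ ∨ j₄ + l + 1 < j₃) :
    IsShortcutTuple l (s + (j₁ : ZMod n)) (s + (j₂ : ZMod n)) (s + (j₃ : ZMod n))
      (s + (j₄ : ZMod n)) := by
  have hsucc (j : ℕ) : s + (j : ZMod n) + 1 = s + ((j + 1 : ℕ) : ZMod n) := by push_cast; ring
  have hend : s + (j₄ : ZMod n) + (l : ZMod n) + 1 = s + ((j₄ + l + 1 : ℕ) : ZMod n) := by
    push_cast; ring
  refine ⟨h₃₄.imp (fun h => ?_) fun h => ?_, fun e he => ?_⟩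
  · rw [hend, hsucc, hsucc, hsucc]
    exact inClockwiseOrder_map_add_natCast s
      (l := [j₂, j₂ + 1, j₃, j₃ + 1, j₄, j₄ + l + 1]) (by simp; omega) (by simp; omega)
  · rw [hend, hsucc, hsucc, hsucc]
    exact inClockwiseOrder_map_add_natCast s
      (l := [j₂, j₂ + 1, j₄, j₄ + l + 1, j₃, j₃ + 1]) (by simp; omega) (by simp; omega)
  · simp only [shortcutEdges, Finset.mem_insert, Finset.mem_singleton] at he
    rw [hend, hsucc, hsucc, hsucc] at he
    rcases he with rfl | rfl | rfl | rfl <;> apply notMem_edgeSet_cycleGraph <;> omega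

end ClockwiseOrder

section Coordinates

open scoped Finset

variable {n : ℕ}

/-- The clockwise coordinate of `x` seen from the base point `s`. -/
def coordFrom (s x : ZMod n) : ℕ := arcDist s x

lemma coordFrom_add_natCast_self (s : ZMod n) {k : ℕ} (hk : k < n) :
    coordFrom s (s + (k : ZMod n)) = k := by
  rw [coordFrom, arcDist, add_sub_cancel_left, ZMod.val_cast_of_lt hk]

variable [NeZero n]

lemma coordFrom_lt (s x : ZMod n) : coordFrom s x < n := ZMod.val_lt _

lemma add_coordFrom (s x : ZMod n) : s + (coordFrom s x : ZMod n) = x := by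
  rw [coordFrom, arcDist, ZMod.natCast_zmod_val, add_sub_cancel]

lemma coordFrom_add_natCast {s x : ZMod n} {k : ℕ} (h : coordFrom s x + k < n) :
    coordFrom s (x + (k : ZMod n)) = coordFrom s x + k := by
  conv_lhs => rw [← add_coordFrom s x, add_assoc, ← Nat.cast_add]
  exact coordFrom_add_natCast_self s h

lemma coordFrom_injective (s : ZMod n) : Function.Injective (coordFrom s) := fun x y h => by
  rw [← add_coordFrom s x, ← add_coordFrom s y, h]

/-- The arc of the points whose clockwise distance from `s` lies in `[a, b)`. -/
noncomputable def coordArc (s : ZMod n) (a b : ℕ) : Finset (ZMod n) :=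
  {x | coordFrom s x ∈ Set.Ico a b}

lemma mem_coordArc {s x : ZMod n} {a b : ℕ} :
    x ∈ coordArc s a b ↔ a ≤ coordFrom s x ∧ coordFrom s x < b := by
  simp [coordArc]

lemma card_coordArc_le (s : ZMod n) (a b : ℕ) : #(coordArc s a b) ≤ b - a := by
  rw [← Nat.card_Ico]
  exact Finset.card_le_card_of_injOn (coordFrom s) (fun x hx => by simpa [mem_coordArc] using hx)
    (coordFrom_injective s).injOn

lemma coordFrom_div_lt (s x : ZMod n) {N : ℕ} (hN : 0 < N) :
    coordFrom s x / (n / N + 1) < N := by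
  rw [Nat.div_lt_iff_lt_mul (Nat.succ_pos _), Nat.mul_add_one, mul_comm]
  exact (coordFrom_lt s x).trans (Nat.lt_div_mul_add hN)

lemma coordFrom_add_div_mul (s x : ZMod n) (m : ℕ) :
    coordFrom (s + ((coordFrom s x / m * m : ℕ) : ZMod n)) x = coordFrom s x % m := by
  generalize hs : s + ((coordFrom s x / m * m : ℕ) : ZMod n) = s'
  have hx : s' + ((coordFrom s x % m : ℕ) : ZMod n) = x := by
    rw [← hs, add_assoc, ← Nat.cast_add, Nat.div_add_mod', add_coordFrom]
  conv_lhs => rw [← hx]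
  exact coordFrom_add_natCast_self s' ((Nat.mod_le _ _).trans_lt (coordFrom_lt s x))

end Coordinates

/-! ### Finite sums -/

section FiniteSums

open scoped Finset

variable {ι : Type*}

lemma sum_le_sum_filter_add_card_mul (A : Finset ι) (g : ι → ℝ) {c : ℝ} (hc : 0 ≤ c) :
    ∑ x ∈ A, g x ≤ ∑ x ∈ A with c ≤ g x, g x + #A * c := by
  rw [← Finset.sum_filter_add_sum_filter_not A (fun x => c ≤ g x)]
  gcongr
  calc ∑ x ∈ A with ¬ c ≤ g x, g x ≤ #{x ∈ A | ¬ c ≤ g x} • c :=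
        Finset.sum_le_card_nsmul _ _ _ fun x hx => (not_le.1 (Finset.mem_filter.1 hx).2).le
    _ ≤ #A * c := by rw [nsmul_eq_mul]; gcongr; exact Finset.filter_subset _ _

lemma card_sub_le_card_filter_le {A : Finset ι} {g : ι → ℝ} (hg : ∀ x ∈ A, 0 ≤ g x) {c Λ : ℝ}
    (hΛ : 0 < Λ) (hsum : ∑ x ∈ A, g x ≤ c * Λ) : #A - c ≤ #{x ∈ A | g x ≤ Λ} := by
  have hlarge : (#{x ∈ A | ¬ g x ≤ Λ} : ℝ) ≤ c := by
    refine le_of_mul_le_mul_right ?_ hΛ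
    calc #{x ∈ A | ¬ g x ≤ Λ} * Λ ≤ ∑ x ∈ A with ¬ g x ≤ Λ, g x := by
          rw [← nsmul_eq_mul]
          exact Finset.card_nsmul_le_sum _ _ _ fun x hx =>
            (not_le.1 (Finset.mem_filter.1 hx).2).le
      _ ≤ ∑ x ∈ A, g x := Finset.sum_le_sum_of_subset_of_nonneg (Finset.filter_subset _ _)
          fun x hx _ => hg x hx
      _ ≤ c * Λ := hsum
  have hcard : (#{x ∈ A | g x ≤ Λ} + #{x ∈ A | ¬ g x ≤ Λ} : ℝ) = #A :=
    mod_cast Finset.card_filter_add_card_filter_not _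
  linarith

lemma sq_sum_le_card_filter_ne_zero_mul_sum_sq (A : Finset ι) (w : ι → ℝ) :
    (∑ x ∈ A, w x) ^ 2 ≤ #{x ∈ A | w x ≠ 0} * ∑ x ∈ A, w x ^ 2 := by
  rw [← Finset.sum_filter_ne_zero]
  refine sq_sum_le_card_mul_sum_sq.trans ?_
  exact mul_le_mul_of_nonneg_left (Finset.sum_le_sum_of_subset_of_nonneg
    (Finset.filter_subset _ A) fun x _ _ => sq_nonneg (w x)) (Nat.cast_nonneg _)

lemma exists_card_filter_lt_eq {A : Finset ι} {c : ι → ℕ} (hc : Set.InjOn c A) {k : ℕ}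
    (hk : k < #A) : ∃ t, #{x ∈ A | c x < t} = k ∧ #{x ∈ A | t < c x} + k + 1 = #A := by
  have hcard : #(A.image c) = #A := Finset.card_image_of_injOn hc
  have hfilter (p : ℕ → Prop) [DecidablePred p] : #{x ∈ A | p (c x)} = #{a ∈ A.image c | p a} := by
    rw [Finset.filter_image,
      Finset.card_image_of_injOn (hc.mono (Finset.coe_subset.2 (Finset.filter_subset _ _)))]
  have hfin (h : (Set.ofPred (· ∈ A.image c)).Finite) : k < #h.toFinset := by
    rwa [show h.toFinset = A.image c by ext; simp, hcard]
  set t := Nat.nth (· ∈ A.image c) k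
  have ht : t ∈ A.image c := Nat.nth_mem k hfin
  have hlt : #{a ∈ A.image c | a < t} = k := by
    rw [← Nat.count_nth hfin, Nat.count_eq_card_filter_range]
    congr 1
    ext a
    simp [and_comm, t]
  have heq : #{a ∈ A.image c | a = t} = 1 := by
    rw [Finset.filter_eq', if_pos ht, Finset.card_singleton]
  refine ⟨t, (hfilter (· < t)).trans hlt, ?_⟩
  have hgt : #{x ∈ A | t < c x} = #{a ∈ A.image c | t < a} := hfilter (t < ·)
  rw [hgt, ← hcard, ← Finset.card_filter_add_card_filter_not (s := A.image c) (t < ·),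
    Finset.filter_congr fun a _ => not_lt.trans le_iff_lt_or_eq, Finset.filter_or,
    Finset.card_union_of_disjoint (Finset.disjoint_filter.2 fun a _ h => h.ne), hlt, heq]
  rfl

/-- The sparse form of `|N ∩ N'| ≥ |N| + |N'| - n`. -/
lemma sub_le_sum_filter_mul {u v : ι → ℝ} {J : Finset ι} {ζ s : ℝ}
    (hu : ∀ y, 0 ≤ u y) (hv : ∀ y, 0 ≤ v y)
    (hU : ∀ Y : Finset ι, ∑ y ∈ Y, u y ≤ #Y + ζ) (hV : ∀ Y : Finset ι, ∑ y ∈ Y, v y ≤ #Y + ζ)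
    (h : #J + s ≤ ∑ y ∈ J, u y + ∑ y ∈ J, v y) :
    s - 3 * ζ ≤ ∑ y ∈ J with u y ≤ 2, u y * v y := by
  have excess_le (w : ι → ℝ) (hw : ∀ Y : Finset ι, ∑ y ∈ Y, w y ≤ #Y + ζ) (c : ℝ) :
      ∑ y ∈ J, (if c < w y then w y - 1 else 0) ≤ ζ := by
    rw [← Finset.sum_filter, Finset.sum_sub_distrib]
    simpa [add_comm] using hw {y ∈ J | c < w y}
  have pointwise : ∀ y ∈ J, u y + v y - 1 - (if 1 < u y then u y - 1 else 0)
      - (if 1 < v y then v y - 1 else 0) - (if 2 < u y then u y - 1 else 0)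
      ≤ if u y ≤ 2 then u y * v y else 0 := by
    intro y _
    have := hu y
    have := hv y
    split_ifs <;> nlinarith
  have := Finset.sum_le_sum pointwise
  rw [← Finset.sum_filter] at this
  simp only [Finset.sum_sub_distrib, Finset.sum_add_distrib, Finset.sum_const, nsmul_eq_mul,
    mul_one] at this
  linarith [excess_le u hU 1, excess_le v hV 1, excess_le u hU 2]

lemma mul_le_two_mul_card_filter_add [Fintype ι] (d : ι → ℝ) (e : Equiv.Perm ι) {ε ζ : ℝ}
    (hε : 0 ≤ 1 + ε) (hd : ∀ X : Finset ι, ∑ x ∈ X, d x ≤ #X + ζ)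
    (htot : (1 / 2 + ε) * Fintype.card ι ≤ ∑ x, d x) :
    ε * Fintype.card ι ≤ 2 * (#{x | 1 + ε ≤ d x + d (e x)} + ζ) := by
  set X : Finset ι := {x | 1 + ε ≤ d x + d (e x)}
  have hsum := sum_le_sum_filter_add_card_mul Finset.univ (fun x => d x + d (e x)) hε
  have hshift : ∑ x ∈ X, d (e x) ≤ #X + ζ := by simpa using hd (X.map e.toEmbedding)
  rw [Finset.sum_add_distrib, Finset.sum_add_distrib, Equiv.sum_comp e d, Finset.card_univ] at hsum
  linarith [hd X]

end FiniteSums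

/-! ### Upper-uniform weights -/

section UpperUniform

open scoped Finset

variable {α β γ : Type*} {f : α → γ → ℝ} {g : β → γ → ℝ} {D : ℝ}

/-- The total weight of `f` on the rectangle `A × B`. -/
noncomputable def rectWeight (f : α → γ → ℝ) (A : Finset α) (B : Finset γ) : ℝ :=
  ∑ x ∈ A, ∑ y ∈ B, f x y

lemma rectWeight_const_mul (c : ℝ) (f : α → γ → ℝ) (A : Finset α) (B : Finset γ) :
    rectWeight (fun x y => c * f x y) A B = c * rectWeight f A B := by
  simp only [rectWeight, Finset.mul_sum]

/-- The weight `f` has no rectangle much denser than `1`: the weight of a rectangle exceeds its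
size by at most `D`. This is the one-sided pseudorandomness inherited by all subgraphs of a
random graph, normalised by the edge probability. -/
def IsUpperUniform (f : α → γ → ℝ) (D : ℝ) : Prop :=
  ∀ A B, rectWeight f A B ≤ #A * #B + D

lemma IsUpperUniform.mono {D' : ℝ} (h : IsUpperUniform f D) (hD : D ≤ D') :
    IsUpperUniform f D' := fun A B => (h A B).trans (by linarith)

/-- The average of column `y` of `f` over the rows in `A`. -/
noncomputable def colAverage (f : α → γ → ℝ) (A : Finset α) (y : γ) : ℝ :=
  (∑ x ∈ A, f x y) / #A

lemma rectWeight_filter_exists_ne_zero (f : α → γ → ℝ) (A : Finset α) (J : Finset γ) :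
    rectWeight f A {y ∈ J | ∃ x ∈ A, f x y ≠ 0} = rectWeight f A J :=
  Finset.sum_congr rfl fun x hx => Finset.sum_filter_of_ne fun _ _ h => ⟨x, hx, h⟩

lemma sum_colAverage (f : α → γ → ℝ) (A : Finset α) (Y : Finset γ) :
    ∑ y ∈ Y, colAverage f A y = rectWeight f A Y / #A := by
  rw [rectWeight, Finset.sum_comm, Finset.sum_div]
  rfl

lemma card_mul_colAverage (f : α → γ → ℝ) {A : Finset α} (hA : A.Nonempty) (y : γ) :
    #A * colAverage f A y = ∑ x ∈ A, f x y :=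
  mul_div_cancel₀ _ (Nat.cast_ne_zero.2 hA.card_ne_zero)

lemma colAverage_nonneg (hf : ∀ x y, 0 ≤ f x y) (A : Finset α) (y : γ) : 0 ≤ colAverage f A y :=
  div_nonneg (Finset.sum_nonneg fun x _ => hf x y) (Nat.cast_nonneg _)

namespace IsUpperUniform

lemma comp_embedding (h : IsUpperUniform f D) {α' γ' : Type*} (e : α' ↪ α) (e' : γ' ↪ γ) :
    IsUpperUniform (fun x y => f (e x) (e' y)) D := fun A B => by
  simpa [rectWeight] using h (A.map e) (B.map e')

lemma le_rectWeight [Fintype γ] [DecidableEq γ] (h : IsUpperUniform f D) {A : Finset α}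
    {J : Finset γ} {d c : ℝ} (hA : ∀ x ∈ A, d ≤ ∑ y, f x y) (hJ : #Jᶜ ≤ c) :
    (d - c) * #A - D ≤ rectWeight f A J := by
  have hrows : d * #A ≤ rectWeight f A J + rectWeight f A Jᶜ := by
    simp only [rectWeight, ← Finset.sum_add_distrib, Finset.sum_add_sum_compl]
    simpa [mul_comm] using Finset.card_nsmul_le_sum A _ d hA
  have hcompl : (#A : ℝ) * #Jᶜ ≤ #A * c := by gcongr
  linarith [h A Jᶜ]

lemma sum_colAverage_le (h : IsUpperUniform f D) {A : Finset α} (hA : A.Nonempty) {ζ : ℝ}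
    (hζ : D ≤ ζ * #A) (Y : Finset γ) : ∑ y ∈ Y, colAverage f A y ≤ #Y + ζ := by
  rw [sum_colAverage, div_le_iff₀ (Nat.cast_pos.2 hA.card_pos)]
  linarith [h A Y]

lemma sub_le_card_filter_exists_ne_zero [Fintype γ] [DecidableEq γ] (h : IsUpperUniform f D)
    {A : Finset α} {J : Finset γ} {d c ζ : ℝ} (hA : A.Nonempty) (hrow : ∀ x ∈ A, d ≤ ∑ y, f x y)
    (hJ : #Jᶜ ≤ c) (hζ : D ≤ ζ * #A) : d - c - 2 * ζ ≤ #{y ∈ J | ∃ x ∈ A, f x y ≠ 0} := by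
  have hlow := h.le_rectWeight hrow hJ
  rw [← rectWeight_filter_exists_ne_zero] at hlow
  refine le_of_mul_le_mul_right ?_ (Nat.cast_pos.2 hA.card_pos)
  linarith [h A {y ∈ J | ∃ x ∈ A, f x y ≠ 0}]

/-- Since the columns counted are cut off at average `2`, a row `x` of `g` contributes at most
twice its weight on `J`, so the total overlap `σ` has to be shared by many rows. -/
lemma card_mul_le_card_filter_overlap (hg : IsUpperUniform g D) (hg₀ : ∀ x y, 0 ≤ g x y)
    {u : γ → ℝ} {A : Finset β} {J : Finset γ} {σ : ℝ} (hσ : 0 ≤ σ) (hA : A.Nonempty)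
    (hu : ∀ y ∈ J, u y ≤ 2) (hsum : σ ≤ ∑ y ∈ J, u y * colAverage g A y) :
    #A * (σ / 2) ≤ 2 * (#{x ∈ A | σ / 2 ≤ ∑ y ∈ J, u y * g x y} * #J + D) := by
  set X := {x ∈ A | σ / 2 ≤ ∑ y ∈ J, u y * g x y}
  have htotal : ∑ x ∈ A, ∑ y ∈ J, u y * g x y = #A * ∑ y ∈ J, u y * colAverage g A y := by
    rw [Finset.sum_comm, Finset.mul_sum]
    refine Finset.sum_congr rfl fun y _ => ?_
    rw [← Finset.mul_sum, ← card_mul_colAverage g hA]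
    ring
  have hrows : ∑ x ∈ X, ∑ y ∈ J, u y * g x y ≤ 2 * rectWeight g X J := by
    simp only [rectWeight, Finset.mul_sum]
    gcongr with x _ y hy
    exacts [hg₀ x y, hu y hy]
  have hsplit := sum_le_sum_filter_add_card_mul A (fun x => ∑ y ∈ J, u y * g x y)
    (div_nonneg hσ two_pos.le)
  have : #A * σ ≤ #A * ∑ y ∈ J, u y * colAverage g A y := by gcongr
  linarith [hg X J]

end IsUpperUniform

lemma sq_card_mul_overlap_le {A : Finset α} {J J' : Finset γ} (hf : ∀ x y, 0 ≤ f x y)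
    (hg : ∀ x y, 0 ≤ g x y) (hA : A.Nonempty) (hJ : J' ⊆ J) (x' : β) :
    (#A * ∑ y ∈ J', colAverage f A y * g x' y) ^ 2 ≤
      #{x ∈ A | ∃ y ∈ J, f x y ≠ 0 ∧ g x' y ≠ 0} * ∑ x ∈ A, (∑ y ∈ J, f x y * g x' y) ^ 2 := by
  have hexpand : #A * ∑ y ∈ J', colAverage f A y * g x' y = ∑ x ∈ A, ∑ y ∈ J', f x y * g x' y := by
    rw [Finset.sum_comm, Finset.mul_sum]
    refine Finset.sum_congr rfl fun y _ => ?_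
    rw [← mul_assoc, card_mul_colAverage f hA, Finset.sum_mul]
  have hmono : ∑ x ∈ A, ∑ y ∈ J', f x y * g x' y ≤ ∑ x ∈ A, ∑ y ∈ J, f x y * g x' y :=
    Finset.sum_le_sum fun x _ => Finset.sum_le_sum_of_subset_of_nonneg hJ
      fun y _ _ => mul_nonneg (hf x y) (hg x' y)
  have hnonneg : 0 ≤ ∑ x ∈ A, ∑ y ∈ J', f x y * g x' y :=
    Finset.sum_nonneg fun x _ => Finset.sum_nonneg fun y _ => mul_nonneg (hf x y) (hg x' y)
  rw [hexpand]
  refine (pow_le_pow_left₀ hnonneg hmono 2).trans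
    ((sq_sum_le_card_filter_ne_zero_mul_sum_sq A _).trans ?_)
  gcongr
  intro hne
  obtain ⟨y, hy, hfg⟩ := Finset.exists_ne_zero_of_sum_ne_zero hne
  exact ⟨y, hy, left_ne_zero_of_mul hfg, right_ne_zero_of_mul hfg⟩

lemma le_sum_colAverage_mul_colAverage (hf : ∀ x y, 0 ≤ f x y) (hg : ∀ x y, 0 ≤ g x y)
    (hfD : IsUpperUniform f D) (hgD : IsUpperUniform g D) {A₁ : Finset α} {A₂ : Finset β}
    {J : Finset γ} (hA₁ : A₁.Nonempty) (hA₂ : A₂.Nonempty) {ζ a b : ℝ} (hζ₁ : D ≤ ζ * #A₁)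
    (hζ₂ : D ≤ ζ * #A₂) (hJ₁ : a * #A₁ - D ≤ rectWeight f A₁ J)
    (hJ₂ : b * #A₂ - D ≤ rectWeight g A₂ J) :
    a + b - #J - 5 * ζ ≤
      ∑ y ∈ J with colAverage f A₁ y ≤ 2, colAverage f A₁ y * colAverage g A₂ y := by
  have ha : a - ζ ≤ ∑ y ∈ J, colAverage f A₁ y := by
    rw [sum_colAverage, le_div_iff₀ (Nat.cast_pos.2 hA₁.card_pos)]
    linarith
  have hb : b - ζ ≤ ∑ y ∈ J, colAverage g A₂ y := by
    rw [sum_colAverage, le_div_iff₀ (Nat.cast_pos.2 hA₂.card_pos)]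
    linarith
  have := sub_le_sum_filter_mul (s := a + b - #J - 2 * ζ) (colAverage_nonneg hf A₁)
    (colAverage_nonneg hg A₂) (hfD.sum_colAverage_le hA₁ hζ₁) (hgD.sum_colAverage_le hA₂ hζ₂)
    (by linarith)
  linarith

/-- The average number of columns of `J` shared by a row of `A₁` and a row of `A₂` is large because
`a + b > 1`, and the second moment `K` spreads the shared columns over many pairs of rows. It is
essential that the number of rows obtained does not depend on `K`. -/
lemma exists_rows_with_partners (hf : ∀ x y, 0 ≤ f x y) (hg : ∀ x y, 0 ≤ g x y)
    (hfD : IsUpperUniform f D) (hgD : IsUpperUniform g D) {A₁ : Finset α} {A₂ : Finset β}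
    {J : Finset γ} {ε κ K n a b : ℝ} (hε : 0 < ε) (hκ : 0 < κ) (hK : 0 < K) (hn : 0 < n)
    (hD : D ≤ ε * κ / 64 * n ^ 2) (hab : 1 + 3 * ε / 8 ≤ a + b) (hJn : #J ≤ n)
    (hA₁ : κ * n ≤ #A₁) (hA₂ : κ * n ≤ #A₂) (hJ₁ : a * n * #A₁ - D ≤ rectWeight f A₁ J)
    (hJ₂ : b * n * #A₂ - D ≤ rectWeight g A₂ J)
    (hmoment : ∑ x' ∈ A₂, ∑ x ∈ A₁, (∑ y ∈ J, f x y * g x' y) ^ 2 ≤ K * n ^ 4) :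
    ∃ X ⊆ A₂, ε * κ / 64 * n ≤ #X ∧ ∀ x' ∈ X, ε ^ 3 * κ ^ 3 / (4096 * K) * n ≤
      #{x ∈ A₁ | ∃ y ∈ J, f x y ≠ 0 ∧ g x' y ≠ 0} := by
  have hA₁' : A₁.Nonempty := Finset.card_pos.1 (Nat.cast_pos.1 ((mul_pos hκ hn).trans_le hA₁))
  have hA₂' : A₂.Nonempty := Finset.card_pos.1 (Nat.cast_pos.1 ((mul_pos hκ hn).trans_le hA₂))
  have hDζ {c : ℝ} (hc : κ * n ≤ c) : D ≤ ε / 64 * n * c := by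
    calc D ≤ ε / 64 * n * (κ * n) := by linarith
      _ ≤ ε / 64 * n * c := by gcongr
  set J' := {y ∈ J | colAverage f A₁ y ≤ 2} with hJ'
  set r : β → ℝ := fun x' => ∑ y ∈ J', colAverage f A₁ y * g x' y with hr
  set X₂ := {x' ∈ A₂ | ε / 4 * n / 2 ≤ r x'}
  set S : β → ℝ := fun x' => ∑ x ∈ A₁, (∑ y ∈ J, f x y * g x' y) ^ 2
  have hS₀ (x' : β) : 0 ≤ S x' := Finset.sum_nonneg fun _ _ => sq_nonneg _
  set Λ : ℝ := K * n ^ 3 * 64 / (ε * κ) with hΛ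
  have hoverlap : ε / 4 * n ≤ ∑ y ∈ J', colAverage f A₁ y * colAverage g A₂ y := by
    have := le_sum_colAverage_mul_colAverage hf hg hfD hgD hA₁' hA₂' (hDζ hA₁) (hDζ hA₂) hJ₁ hJ₂
    have := mul_le_mul_of_nonneg_right hab hn.le
    linarith [mul_pos hε hn]
  have hX₂ : ε * κ / 32 * n ≤ #X₂ := by
    have hrows := hgD.card_mul_le_card_filter_overlap hg (by positivity) hA₂'
      (fun y hy => (Finset.mem_filter.1 hy).2) hoverlap
    have hJ'n : (#J' : ℝ) ≤ n := le_trans (mod_cast Finset.card_filter_le _ _) hJn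
    have : (#X₂ : ℝ) * #J' ≤ #X₂ * n := by gcongr
    have : κ * n * (ε / 4 * n / 2) ≤ #A₂ * (ε / 4 * n / 2) := by gcongr
    refine le_of_mul_le_mul_right ?_ hn
    linarith [mul_pos (mul_pos hε hκ) (pow_pos hn 2)]
  refine ⟨{x' ∈ X₂ | S x' ≤ Λ},
    (Finset.filter_subset _ _).trans (Finset.filter_subset _ _), ?_, fun x' hx' => ?_⟩
  · have hsum : ∑ x' ∈ X₂, S x' ≤ ε * κ / 64 * n * Λ := by
      calc ∑ x' ∈ X₂, S x' ≤ ∑ x' ∈ A₂, S x' := Finset.sum_le_sum_of_subset_of_nonneg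
            (Finset.filter_subset _ _) fun x' _ _ => hS₀ x'
        _ ≤ K * n ^ 4 := hmoment
        _ = ε * κ / 64 * n * Λ := by rw [hΛ]; field_simp
    linarith [card_sub_le_card_filter_le (fun x' _ => hS₀ x') (by positivity) hsum]
  · obtain ⟨hx'X, hSx'⟩ := Finset.mem_filter.1 hx'
    have hrx' : ε / 4 * n / 2 ≤ r x' := (Finset.mem_filter.1 hx'X).2
    refine le_of_mul_le_mul_right ?_ (show 0 < Λ by positivity)
    calc ε ^ 3 * κ ^ 3 / (4096 * K) * n * Λ = (κ * n * (ε / 4 * n / 2)) ^ 2 := by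
          rw [hΛ]; field_simp; ring
      _ ≤ (#A₁ * r x') ^ 2 := by gcongr
      _ ≤ #{x ∈ A₁ | ∃ y ∈ J, f x y ≠ 0 ∧ g x' y ≠ 0} * S x' :=
          sq_card_mul_overlap_le hf hg hA₁' (Finset.filter_subset _ _) x'
      _ ≤ _ := by gcongr

end UpperUniform

/-! ### Classes of points with similar rows -/

section Classes

open scoped Finset

/-- The number of the interval `[kκ, (k + 1)κ)` containing `d`, capped at `L`. -/
noncomputable def gridLevel (κ : ℝ) (L : ℕ) (d : ℝ) : ℕ := min ⌊d / κ⌋₊ L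

lemma mul_gridLevel_le {κ d : ℝ} (hκ : 0 < κ) (hd : 0 ≤ d) (L : ℕ) : κ * gridLevel κ L d ≤ d := by
  rw [mul_comm, ← le_div_iff₀ hκ]
  exact (Nat.cast_le.2 (min_le_left _ _)).trans (Nat.floor_le (div_nonneg hd hκ.le))

lemma min_sub_le_mul_gridLevel {κ : ℝ} (hκ : 0 < κ) (L : ℕ) (d : ℝ) :
    min (d - κ) (κ * L) ≤ κ * gridLevel κ L d := by
  rcases le_total ⌊d / κ⌋₊ L with h | h
  · rw [gridLevel, min_eq_left h, ← div_le_iff₀' hκ]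
    refine (div_le_div_of_nonneg_right (min_le_left _ _) hκ.le).trans ?_
    rw [sub_div, div_self hκ.ne']
    exact (Nat.sub_one_lt_floor _).le
  · rw [gridLevel, min_eq_right h]
    exact min_le_right _ _

lemma one_add_le_mul_gridLevel_add {ε d d' : ℝ} {L : ℕ} (hε : 0 < ε) (hε₁ : ε ≤ 1)
    (hL : 8 / ε ≤ L) (h : 1 + ε ≤ d + d') :
    1 + ε / 2 ≤ ε / 4 * gridLevel (ε / 4) L d + ε / 4 * gridLevel (ε / 4) L d' := by
  have hκ : 0 < ε / 4 := by positivity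
  have hκL : 2 ≤ ε / 4 * L := by
    rw [div_le_iff₀ hε] at hL
    linarith
  have hd := min_sub_le_mul_gridLevel hκ L d
  have hd' := min_sub_le_mul_gridLevel hκ L d'
  have : 0 ≤ ε / 4 * (gridLevel (ε / 4) L d : ℝ) := by positivity
  have : 0 ≤ ε / 4 * (gridLevel (ε / 4) L d' : ℝ) := by positivity
  rcases min_le_iff.1 hd with hd | hd <;> rcases min_le_iff.1 hd' with hd' | hd' <;> linarith

lemma exists_color_class {ι : Type*} [Fintype ι] [Nonempty ι] {d : ι → ℝ} (e : Equiv.Perm ι)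
    {c : ι → ℕ} {ε ζ : ℝ} {L N : ℕ} (hε : 0 < ε) (hε₁ : ε ≤ 1) (hL : 8 / ε ≤ L)
    (hc : ∀ x, c x < N) (hζ : ζ ≤ ε / 4 * Fintype.card ι) (hd₀ : ∀ x, 0 ≤ d x)
    (hd : ∀ X : Finset ι, ∑ x ∈ X, d x ≤ #X + ζ)
    (htot : (1 / 2 + ε) * Fintype.card ι ≤ ∑ x, d x) :
    ∃ (a b : ℝ) (k : ℕ) (A : Finset ι), 1 + ε / 2 ≤ a + b ∧
      ε / 4 * Fintype.card ι / ((L + 1) ^ 2 * N) ≤ #A ∧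
      ∀ x ∈ A, a ≤ d x ∧ b ≤ d (e x) ∧ c x = k := by
  have hN : 0 < N := (Nat.zero_le _).trans_lt (hc (Classical.arbitrary ι))
  have hκ : 0 < ε / 4 := by positivity
  set X : Finset ι := {x | 1 + ε ≤ d x + d (e x)}
  have hX : ε / 4 * Fintype.card ι ≤ #X := by
    linarith [mul_le_two_mul_card_filter_add d e (by linarith) hd htot]
  set color : ι → ℕ × ℕ × ℕ := fun x =>
    (gridLevel (ε / 4) L (d x), gridLevel (ε / 4) L (d (e x)), c x) with hcolor
  set colors := Finset.range (L + 1) ×ˢ Finset.range (L + 1) ×ˢ Finset.range N with hcolors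
  obtain ⟨⟨k₁, k₂, k⟩, -, hcard⟩ := Finset.exists_le_card_fiber_of_nsmul_le_card_of_maps_to
    (M := ℝ) (s := X) (t := colors) (f := color)
    (b := ε / 4 * Fintype.card ι / ((L + 1) ^ 2 * N))
    (fun x _ => by simp [hcolors, hcolor, gridLevel, hc x])
    ⟨(0, 0, 0), by simp [hcolors, hN]⟩ (by
      refine le_trans (le_of_eq ?_) hX
      rw [nsmul_eq_mul, hcolors, Finset.card_product, Finset.card_product, Finset.card_range,
        Finset.card_range]
      push_cast
      field_simp)
  set A := {x ∈ X | color x = (k₁, k₂, k)}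
  have hA : ∀ x ∈ A, 1 + ε ≤ d x + d (e x) ∧ gridLevel (ε / 4) L (d x) = k₁ ∧
      gridLevel (ε / 4) L (d (e x)) = k₂ ∧ c x = k := fun x hx => by
    simpa [A, X, hcolor] using hx
  have hA₀ : A.Nonempty := Finset.card_pos.1 (Nat.cast_pos.1 (lt_of_lt_of_le (by positivity) hcard))
  refine ⟨ε / 4 * k₁, ε / 4 * k₂, k, A, ?_, hcard, fun x hx => ?_⟩
  · obtain ⟨x, hx⟩ := hA₀
    obtain ⟨hsum, rfl, rfl, -⟩ := hA x hx
    exact one_add_le_mul_gridLevel_add hε hε₁ hL hsum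
  · obtain ⟨-, rfl, rfl, hk⟩ := hA x hx
    exact ⟨mul_gridLevel_le hκ (hd₀ _) L, mul_gridLevel_le hκ (hd₀ _) L, hk⟩

variable {n : ℕ} [NeZero n] {f : ZMod n → ZMod n → ℝ}

lemma exists_split_class {ε D κ : ℝ} {L N : ℕ} (hε : 0 < ε) (hε₁ : ε ≤ 1) (hL : 8 / ε ≤ L)
    (hN : 0 < N) (hκ : κ * (16 * ((L + 1) ^ 2 * N)) = ε) (hκn : 1 ≤ κ * n)
    (hD : D ≤ ε / 4 * n ^ 2) (hf : ∀ x y, 0 ≤ f x y) (hfD : IsUpperUniform f D)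
    (htot : (1 / 2 + ε) * n ^ 2 ≤ rectWeight f Finset.univ Finset.univ) :
    ∃ (a b : ℝ) (s : ZMod n) (A₁ A₂ : Finset (ZMod n)) (t : ℕ), 1 + ε / 2 ≤ a + b ∧
      κ * n ≤ #A₁ ∧ κ * n ≤ #A₂ ∧
      (∀ x, x ∈ A₁ ∨ x ∈ A₂ → a * n ≤ ∑ y, f x y ∧ b * n ≤ ∑ y, f (x + 1) y) ∧
      (∀ x ∈ A₁, coordFrom s x < t) ∧
      ∀ x ∈ A₂, t < coordFrom s x ∧ coordFrom s x < n / N + 1 := by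
  have hn : (0 : ℝ) < n := Nat.cast_pos.2 (NeZero.pos n)
  have hcard : (Fintype.card (ZMod n) : ℝ) = n := by rw [ZMod.card]
  obtain ⟨a, b, k, A, hab, hA, hrows⟩ := exists_color_class (d := fun x => (∑ y, f x y) / n)
    (Equiv.addRight (1 : ZMod n)) (c := fun x => coordFrom 0 x / (n / N + 1)) (ζ := D / n) hε hε₁ hL
    (fun x => coordFrom_div_lt 0 x hN)
    (by rw [hcard, div_le_iff₀ hn]; linarith)
    (fun x => div_nonneg (Finset.sum_nonneg fun y _ => hf x y) hn.le)
    (fun X => by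
      have := hfD X Finset.univ
      rw [Finset.card_univ, hcard, rectWeight] at this
      rw [← Finset.sum_div, div_le_iff₀ hn, add_mul, div_mul_cancel₀ _ hn.ne']
      exact this)
    (by rw [hcard, ← Finset.sum_div, le_div_iff₀ hn]; exact htot.trans_eq' (by ring))
  replace hA : 4 * (κ * n) ≤ #A := by
    refine le_of_eq_of_le ?_ hA
    rw [hcard, ← hκ]
    field_simp
    ring
  set s : ZMod n := 0 + ((k * (n / N + 1) : ℕ) : ZMod n) with hs
  have hApos : 0 < #A := Nat.cast_pos.1 (lt_of_lt_of_le (by linarith) hA)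
  obtain ⟨t, hlt, hgt⟩ := exists_card_filter_lt_eq (c := coordFrom s) (A := A)
    (coordFrom_injective s).injOn (k := (#A - 1) / 2) (by omega)
  have half_le {k : ℕ} (hk : #A ≤ 2 * k + 2) : κ * n ≤ k := by
    have : (#A : ℝ) ≤ 2 * k + 2 := mod_cast hk
    linarith
  refine ⟨a, b, s, {x ∈ A | coordFrom s x < t}, {x ∈ A | t < coordFrom s x}, t, hab,
    half_le (by omega), half_le (by omega), fun x hx => ?_,
    fun x hx => (Finset.mem_filter.1 hx).2, fun x hx => ⟨(Finset.mem_filter.1 hx).2, ?_⟩⟩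
  · have hxA : x ∈ A := hx.elim (Finset.mem_of_mem_filter x) (Finset.mem_of_mem_filter x)
    obtain ⟨ha, hb, -⟩ := hrows x hxA
    exact ⟨(le_div_iff₀ hn).1 ha, (le_div_iff₀ hn).1 hb⟩
  · obtain ⟨-, -, rfl⟩ := hrows x (Finset.mem_of_mem_filter x hx)
    rw [hs, coordFrom_add_div_mul]
    exact Nat.mod_lt _ (Nat.succ_pos _)

end Classes

/-! ### Closing three edges to a shortcut -/

section Closing

open scoped Finset

variable {n : ℕ}

/-- Three edges of the relation `R` together with the pair `{u, v}` form an `l`-shortcut in which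
`u` has the role of `i₂` and `v` the role of `i₄ + l + 1`. -/
def Closes (R : ZMod n → ZMod n → Prop) (l : ℕ) (u v : ZMod n) : Prop :=
  ∃ i₁ i₃ i₄ : ZMod n, IsShortcutTuple l i₁ u i₃ i₄ ∧ v = i₄ + (l : ZMod n) + 1 ∧
    R i₁ i₃ ∧ R (i₁ + 1) i₄ ∧ R (u + 1) (i₃ + 1)

/-- The pairs of `X ×ˢ J` that do not complete any three edges of `R` to an `l`-shortcut. -/
noncomputable def openPairs (R : ZMod n → ZMod n → Prop) (l : ℕ) (X J : Finset (ZMod n)) :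
    Finset (ZMod n × ZMod n) :=
  {z ∈ X ×ˢ J | ¬ Closes R l z.1 z.2}

variable [NeZero n]

/-- The points beyond the arc of length `m` after `s`, except for the last point before `s`. -/
noncomputable def farPoints (s : ZMod n) (m : ℕ) : Finset (ZMod n) :=
  {y | m < coordFrom s y ∧ coordFrom s y + 1 < n}

/-- The points that can be `i₄` in an `l`-shortcut with `i₁`, `i₂` in the arc of length `m` after
`s` and with `i₃` in the `k`-th of the arcs of length `m` starting at `s`. -/
noncomputable def fourthPoints (s : ZMod n) (m k l : ℕ) : Finset (ZMod n) :=
  {y | m < coordFrom s y ∧ coordFrom s y + l + 2 < n ∧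
    (coordFrom s y + l + 1 < k * m ∨ (k + 1) * m < coordFrom s y)}

lemma card_compl_farPoints_le (s : ZMod n) (m : ℕ) : #(farPoints s m)ᶜ ≤ m + 2 := by
  have hsub : (farPoints s m)ᶜ ⊆
      coordArc s 0 (m + 1) ∪ coordArc s (n - 1) n := by
    intro y hy
    have := coordFrom_lt s y
    simp only [farPoints, Finset.mem_compl, Finset.mem_filter, Finset.mem_univ, true_and,
      Finset.mem_union, mem_coordArc] at hy ⊢
    omega
  have := (Finset.card_le_card hsub).trans (Finset.card_union_le _ _)
  have := card_coordArc_le s 0 (m + 1)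
  have := card_coordArc_le s (n - 1) n
  omega

lemma card_compl_fourthPoints_le (s : ZMod n) (m k l : ℕ) :
    #(fourthPoints s m k l)ᶜ ≤ 2 * m + 2 * l + 5 := by
  have hsub : (fourthPoints s m k l)ᶜ ⊆ coordArc s 0 (m + 1) ∪
      (coordArc s (n - l - 2) n ∪
        coordArc s (k * m - l - 1) ((k + 1) * m + 1)) := by
    intro y hy
    have := coordFrom_lt s y
    simp only [fourthPoints, Finset.mem_compl, Finset.mem_filter, Finset.mem_univ, true_and,
      Finset.mem_union, mem_coordArc] at hy ⊢
    omega
  have := (Finset.card_le_card hsub).trans (Finset.card_union_le _ _)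
  have := Finset.card_union_le (coordArc s (n - l - 2) n)
    (coordArc s (k * m - l - 1) ((k + 1) * m + 1))
  have := card_coordArc_le s 0 (m + 1)
  have := card_coordArc_le s (n - l - 2) n
  have := card_coordArc_le s (k * m - l - 1) ((k + 1) * m + 1)
  have := Nat.add_one_mul k m
  omega

lemma closes_of_mem_fourthPoints {R : ZMod n → ZMod n → Prop} {s i₁ i₂ i₃ i₄ : ZMod n} {m l t : ℕ}
    (h₁ : coordFrom s i₁ < t) (h₂ : t < coordFrom s i₂) (h₂m : coordFrom s i₂ < m)
    (h₃ : i₃ ∈ farPoints s m) (h₄ : i₄ ∈ fourthPoints s m (coordFrom s i₃ / m) l)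
    (h₁₃ : R i₁ i₃) (h₁₄ : R (i₁ + 1) i₄) (h₂₃ : R (i₂ + 1) (i₃ + 1)) :
    Closes R l i₂ (i₄ + (l : ZMod n) + 1) := by
  refine ⟨i₁, i₃, i₄, ?_, rfl, h₁₃, h₁₄, h₂₃⟩
  simp only [farPoints, fourthPoints, Finset.mem_filter, Finset.mem_univ, true_and] at h₃ h₄
  have := Nat.div_mul_le_self (coordFrom s i₃) m
  have := Nat.lt_mul_of_div_lt (Nat.lt_add_one (coordFrom s i₃ / m)) ((Nat.zero_le _).trans_lt h₂m)
  rw [← add_coordFrom s i₁, ← add_coordFrom s i₂, ← add_coordFrom s i₃, ← add_coordFrom s i₄]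
  apply isShortcutTuple_add_natCast <;> omega

lemma add_natCast_add_one_mem_farPoints {s y : ZMod n} {m k l : ℕ} (h : y ∈ fourthPoints s m k l) :
    y + (l : ZMod n) + 1 ∈ farPoints s m := by
  simp only [farPoints, fourthPoints, Finset.mem_filter, Finset.mem_univ, true_and] at h ⊢
  rw [add_assoc, ← Nat.cast_one, ← Nat.cast_add, coordFrom_add_natCast (by omega)]
  omega

lemma cast_le_mul_of_le_div {n N r c : ℕ} (hN : 0 < N) (hn : 8 * N ≤ n)
    (h : c ≤ r * (n / N) + 8) : (c : ℝ) ≤ (r + 1) / N * n := by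
  have hN' : (0 : ℝ) < N := Nat.cast_pos.2 hN
  have hdiv : ((n / N : ℕ) : ℝ) ≤ n / N := Nat.cast_div_le
  have : (8 : ℝ) ≤ n / N := by
    rw [le_div_iff₀ hN']
    exact_mod_cast hn
  calc (c : ℝ) ≤ r * (n / N : ℕ) + 8 := mod_cast h
    _ ≤ r * (n / N) + n / N := by gcongr
    _ = (r + 1) / N * n := by ring

variable {f : ZMod n → ZMod n → ℝ} {N : ℕ}

lemma card_compl_farPoints_le_mul (s : ZMod n) (hN : 0 < N) (hn : 8 * N ≤ n) :
    (#(farPoints s (n / N + 1))ᶜ : ℝ) ≤ 2 / N * n := by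
  have := card_compl_farPoints_le s (n / N + 1)
  exact (cast_le_mul_of_le_div (r := 1) hN hn (by omega)).trans_eq (by norm_num)

/-- The rows of `i₁ + 1` reach almost `b n` of the points `i₄` because no rectangle is too dense;
pigeonholing the points `i₃` into one short arc costs only few of the points `i₄`. -/
lemma le_card_closes {D ρ ζ b : ℝ} {l t : ℕ} {s u : ZMod n} (hN : 0 < N) (hn : 8 * N ≤ n)
    (hl : l ≤ n / N) (hρ : 0 < ρ) (hζ : 0 ≤ ζ)
    (hfD : IsUpperUniform f D) (hD : D ≤ ζ * (ρ / N * n))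
    (hu : t < coordFrom s u ∧ coordFrom s u < n / N + 1) {A : Finset (ZMod n)} (hA : ρ * n ≤ #A)
    (hAt : ∀ x ∈ A, coordFrom s x < t) (hb : ∀ x ∈ A, b * n ≤ ∑ y, f (x + 1) y)
    (hpartner : ∀ x ∈ A, ∃ y ∈ farPoints s (n / N + 1), f x y ≠ 0 ∧ f (u + 1) (y + 1) ≠ 0) :
    b * n - 5 / N * n - 2 * ζ ≤
      #{v ∈ farPoints s (n / N + 1) | Closes (fun x y => f x y ≠ 0) l u v} := by
  set m := n / N + 1
  have hn₀ : (0 : ℝ) < n := Nat.cast_pos.2 (NeZero.pos n)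
  choose! w hw hw₁ hw₂ using hpartner
  obtain ⟨k, -, hcard⟩ := Finset.exists_le_card_fiber_of_nsmul_le_card_of_maps_to
    (M := ℝ) (s := A) (t := Finset.range N) (f := fun x => coordFrom s (w x) / m) (b := ρ / N * n)
    (fun x _ => Finset.mem_range.2 (coordFrom_div_lt s (w x) hN)) ⟨0, Finset.mem_range.2 hN⟩ (by
      rw [Finset.card_range, nsmul_eq_mul]
      exact hA.trans_eq' (by field_simp))
  set A' := {x ∈ A | coordFrom s (w x) / m = k}
  set B := {y ∈ fourthPoints s m k l | ∃ x ∈ A', f (x + 1) y ≠ 0}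
  have hA' : A'.Nonempty :=
    Finset.card_pos.1 (Nat.cast_pos.1 (lt_of_lt_of_le (by positivity) hcard))
  have hcompl : (#(fourthPoints s m k l)ᶜ : ℝ) ≤ 5 / N * n := by
    have := card_compl_fourthPoints_le s m k l
    exact (cast_le_mul_of_le_div (r := 4) hN hn (by omega)).trans_eq (by norm_num)
  have hB : b * n - 5 / N * n - 2 * ζ ≤ #B :=
    (hfD.comp_embedding (Equiv.addRight (1 : ZMod n)).toEmbedding (Function.Embedding.refl _)
      |>.sub_le_card_filter_exists_ne_zero hA' (fun x hx => hb x (Finset.mem_of_mem_filter x hx))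
      hcompl (hD.trans (mul_le_mul_of_nonneg_left hcard hζ)))
  refine hB.trans (Nat.cast_le.2 (Finset.card_le_card_of_injOn (fun y => y + (l : ZMod n) + 1)
    (fun y hy => ?_) fun _ _ _ _ h => by simpa using h))
  obtain ⟨hy, x, hx, hxy⟩ := Finset.mem_filter.1 hy
  obtain ⟨hxA, rfl⟩ := Finset.mem_filter.1 hx
  exact Finset.mem_filter.2 ⟨add_natCast_add_one_mem_farPoints hy, closes_of_mem_fourthPoints
    (hAt x hxA) hu.1 hu.2 (hw x hxA) hy (hw₁ x hxA) hxy (hw₂ x hxA)⟩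

lemma exists_rows_closes {ε κ K ρ D : ℝ} {L l : ℕ} (hε : 0 < ε) (hε₁ : ε ≤ 1) (hL : 8 / ε ≤ L)
    (hN : 100 ≤ ε * N) (hκ : κ * (16 * ((L + 1) ^ 2 * N)) = ε) (hκn : 1 ≤ κ * n) (hn : 8 * N ≤ n)
    (hl : l ≤ n / N) (hK : 0 < K) (hρ : ρ = ε ^ 3 * κ ^ 3 / (4096 * K))
    (hD : D ≤ ε * κ / 64 * n ^ 2) (hDρ : D ≤ ε / 16 * n * (ρ / N * n)) (hf : ∀ x y, 0 ≤ f x y)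
    (hfD : IsUpperUniform f D) (htot : (1 / 2 + ε) * n ^ 2 ≤ rectWeight f Finset.univ Finset.univ)
    (hmoment : ∑ x, ∑ x', (∑ y, f x y * f (x' + 1) (y + 1)) ^ 2 ≤ K * n ^ 4) :
    ∃ (a b : ℝ) (s : ZMod n) (X : Finset (ZMod n)), 1 + ε / 2 ≤ a + b ∧ ε * κ / 64 * n ≤ #X ∧
      ∀ u ∈ X, a * n ≤ ∑ y, f u y ∧ (b - ε / 5) * n ≤
        #{v ∈ farPoints s (n / N + 1) | Closes (fun x y => f x y ≠ 0) l u v} := by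
  have hn₀ : (0 : ℝ) < n := Nat.cast_pos.2 (NeZero.pos n)
  have hN₀ : 0 < N := Nat.pos_of_ne_zero (by rintro rfl; norm_num at hN)
  have hN₁ : 5 / (N : ℝ) ≤ ε / 20 := by
    rw [div_le_iff₀ (Nat.cast_pos.2 hN₀)]
    linarith
  have hκ₀ : 0 < κ := pos_of_mul_pos_left (one_pos.trans_le hκn) hn₀.le
  have hκ₁ : κ ≤ 1 := by
    have : (1 : ℝ) ≤ (L + 1) ^ 2 * N := by
      exact_mod_cast Nat.succ_le_of_lt (Nat.mul_pos (pow_pos (Nat.succ_pos L) 2) hN₀)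
    nlinarith
  obtain ⟨a, b, s, A₁, A₂, t, hab, hA₁, hA₂, hrows, hA₁t, hA₂t⟩ :=
    exists_split_class hε hε₁ hL hN₀ hκ hκn (hD.trans (by gcongr ?_ * _; nlinarith)) hf hfD htot
  set J := farPoints s (n / N + 1)
  have hJ : (#Jᶜ : ℝ) ≤ 2 / N * n := card_compl_farPoints_le_mul s hN₀ hn
  have hshift : IsUpperUniform (fun x y => f (x + 1) (y + 1)) D := hfD.comp_embedding
    (Equiv.addRight (1 : ZMod n)).toEmbedding (Equiv.addRight (1 : ZMod n)).toEmbedding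
  have hrow_shift (x : ZMod n) : ∑ y, f (x + 1) (y + 1) = ∑ y, f (x + 1) y :=
    Equiv.sum_comp (Equiv.addRight (1 : ZMod n)) (f (x + 1))
  have hmoment' : ∑ x' ∈ A₂, ∑ x ∈ A₁, (∑ y ∈ J, f x y * f (x' + 1) (y + 1)) ^ 2 ≤
      ∑ x, ∑ x', (∑ y, f x y * f (x' + 1) (y + 1)) ^ 2 := by
    rw [Finset.sum_comm (t := Finset.univ)]
    have hprod (x x' y : ZMod n) : 0 ≤ f x y * f (x' + 1) (y + 1) := mul_nonneg (hf _ _) (hf _ _)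
    refine (Finset.sum_le_univ_sum_of_nonneg fun x' => by positivity).trans
      (Finset.sum_le_sum fun x' _ => (Finset.sum_le_univ_sum_of_nonneg fun x => sq_nonneg _).trans
        (Finset.sum_le_sum fun x _ => ?_))
    exact pow_le_pow_left₀ (Finset.sum_nonneg fun y _ => hprod x x' y)
      (Finset.sum_le_univ_sum_of_nonneg fun y => hprod x x' y) 2
  obtain ⟨X, hXA, hX, hpartner⟩ := exists_rows_with_partners (J := J) (a := a - 2 / N)
    (b := b - 2 / N) hf (fun x y => hf (x + 1) (y + 1)) hfD hshift hε hκ₀ hK hn₀ hD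
    (by linarith [show 2 / (N : ℝ) = 2 / 5 * (5 / N) by ring])
    (by simpa using Finset.card_le_univ J) hA₁ hA₂
    ((hfD.le_rectWeight (fun x hx => (hrows x (.inl hx)).1) hJ).trans_eq' (by ring))
    ((hshift.le_rectWeight (fun x hx => (hrow_shift x).symm ▸ (hrows x (.inr hx)).2) hJ).trans_eq'
      (by ring))
    (hmoment'.trans hmoment)
  refine ⟨a, b, s, X, hab, hX, fun u hu => ⟨(hrows u (.inr (hXA hu))).1, ?_⟩⟩
  rw [← hρ] at hpartner
  have := le_card_closes hN₀ hn hl (by rw [hρ]; positivity) (by positivity) hfD hDρ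
    (hA₂t u (hXA hu)) (hpartner u hu) (fun x hx => hA₁t x (Finset.mem_of_mem_filter x hx))
    (fun x hx => (hrows x (.inl (Finset.mem_of_mem_filter x hx))).2)
    (fun x hx => (Finset.mem_filter.1 hx).2)
  refine le_trans ?_ this
  have := mul_le_mul_of_nonneg_right hN₁ hn₀.le
  linarith [mul_pos hε hn₀]

/-- The pairs that complete no shortcut number at most `(1 - b + ε / 5) n` in each row of `X`,
whereas these rows have weight at least `a n`. -/
lemma exists_rectWeight_excess {ε κ K ρ D : ℝ} {L l : ℕ} (hε : 0 < ε) (hε₁ : ε ≤ 1)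
    (hL : 8 / ε ≤ L) (hN : 100 ≤ ε * N) (hκ : κ * (16 * ((L + 1) ^ 2 * N)) = ε) (hκn : 1 ≤ κ * n)
    (hn : 8 * N ≤ n) (hl : l ≤ n / N) (hK : 0 < K) (hρ : ρ = ε ^ 3 * κ ^ 3 / (4096 * K))
    (hD : D ≤ ε ^ 2 * κ / 512 * n ^ 2) (hDρ : D ≤ ε / 16 * n * (ρ / N * n))
    (hf : ∀ x y, 0 ≤ f x y) (hfD : IsUpperUniform f D)
    (htot : (1 / 2 + ε) * n ^ 2 ≤ rectWeight f Finset.univ Finset.univ)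
    (hmoment : ∑ x, ∑ x', (∑ y, f x y * f (x' + 1) (y + 1)) ^ 2 ≤ K * n ^ 4) :
    ∃ X J : Finset (ZMod n), #(openPairs (fun x y => f x y ≠ 0) l X J) +
      ε ^ 2 * κ / 512 * n ^ 2 ≤ rectWeight f X J := by
  have hn₀ : (0 : ℝ) < n := Nat.cast_pos.2 (NeZero.pos n)
  have hN₀ : 0 < N := Nat.pos_of_ne_zero (by rintro rfl; norm_num at hN)
  have hN₁ : 2 / (N : ℝ) ≤ ε / 50 := by
    rw [div_le_iff₀ (Nat.cast_pos.2 hN₀)]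
    linarith
  have hκ₀ : 0 < κ := pos_of_mul_pos_left (one_pos.trans_le hκn) hn₀.le
  obtain ⟨a, b, s, X, hab, hX, hrows⟩ := exists_rows_closes hε hε₁ hL hN hκ hκn hn hl hK hρ
    (hD.trans (by gcongr ?_ * _; nlinarith [mul_pos hε hκ₀])) hDρ hf hfD htot hmoment
  set J := farPoints s (n / N + 1)
  have hJn : (#J : ℝ) ≤ n := by simpa using Finset.card_le_univ J
  have hopen_row : ∀ u ∈ X, (#{v ∈ J | ¬ Closes (fun x y => f x y ≠ 0) l u v} : ℝ) ≤
      (1 - b + ε / 5) * n := fun u hu => by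
    have hsplit := Finset.card_filter_add_card_filter_not (s := J)
      (Closes (fun x y => f x y ≠ 0) l u)
    have : (#{v ∈ J | Closes (fun x y => f x y ≠ 0) l u v} : ℝ) +
      #{v ∈ J | ¬ Closes (fun x y => f x y ≠ 0) l u v} = #J := mod_cast hsplit
    linarith [(hrows u hu).2]
  have hopen : (#(openPairs (fun x y => f x y ≠ 0) l X J) : ℝ) ≤
      #X * ((1 - b + ε / 5) * n) := by
    rw [openPairs, Finset.card_filter, Finset.sum_product, Nat.cast_sum, ← nsmul_eq_mul]
    exact Finset.sum_le_card_nsmul _ _ _ fun u hu => by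
      simpa only [Finset.card_filter] using hopen_row u hu
  have hweight : (a * n - 2 / N * n) * #X - D ≤ rectWeight f X J :=
    hfD.le_rectWeight (fun u hu => (hrows u hu).1) (card_compl_farPoints_le_mul s hN₀ hn)
  have hgain : ε / 4 ≤ a - 2 / N - (1 - b + ε / 5) := by linarith
  have := calc ε ^ 2 * κ / 256 * n ^ 2 = ε / 4 * (n * (ε * κ / 64 * n)) := by ring
    _ ≤ ε / 4 * (n * #X) := by gcongr
    _ ≤ (a - 2 / N - (1 - b + ε / 5)) * (n * #X) := by gcongr
  refine ⟨X, J, ?_⟩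
  linarith

end Closing

/-! ### Random subsets of a finite set -/

section RandomSubset

open scoped Finset

variable {α : Type*} {p : ℝ}

/-- Each term is at most `(1 / η) ^ m * (η * p) ^ #S`. -/
lemma sum_pow_card_le {η : ℝ} (hp : 0 ≤ p) (hη : 0 < η) (hη₁ : η ≤ 1) (E : Finset α) (m : ℝ) :
    ∑ S ∈ E.powerset with #S ≤ m, p ^ #S ≤
      Real.exp (m * Real.log (1 / η) + η * p * #E) := by
  have hlog : 0 ≤ Real.log (1 / η) := Real.log_nonneg ((one_le_div hη).2 hη₁)
  have hpow (S : Finset α) (hS : #S ≤ m) :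
      p ^ #S ≤ Real.exp (m * Real.log (1 / η)) * (η * p) ^ #S := by
    calc p ^ #S = (1 / η) ^ #S * (η * p) ^ #S := by rw [← mul_pow]; field_simp
      _ = Real.exp (#S * Real.log (1 / η)) * (η * p) ^ #S := by
          rw [Real.exp_nat_mul, Real.exp_log (by positivity)]
      _ ≤ _ := by gcongr
  calc ∑ S ∈ E.powerset with #S ≤ m, p ^ #S
      ≤ ∑ S ∈ E.powerset with #S ≤ m, Real.exp (m * Real.log (1 / η)) * (η * p) ^ #S :=
        Finset.sum_le_sum fun S hS => hpow S (Finset.mem_filter.1 hS).2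
    _ ≤ ∑ S ∈ E.powerset, Real.exp (m * Real.log (1 / η)) * (η * p) ^ #S :=
        Finset.sum_le_sum_of_subset_of_nonneg (Finset.filter_subset _ _) fun _ _ _ => by positivity
    _ = Real.exp (m * Real.log (1 / η)) * (η * p + 1) ^ #E := by
        rw [← Finset.mul_sum]
        simpa using (Finset.sum_pow_mul_eq_add_pow (η * p) 1 E)
    _ ≤ Real.exp (m * Real.log (1 / η)) * Real.exp (#E * (η * p)) := by
        rw [Real.exp_nat_mul]
        gcongr
        exact Real.add_one_le_exp _
    _ = _ := by rw [← Real.exp_add, mul_comm (#E : ℝ)]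

variable [DecidableEq α] {E S : Finset α}

/-- The probability that the `p`-random subset of `E`, which contains each element of `E`
independently with probability `p`, equals `T`. -/
noncomputable def bernWeight (p : ℝ) (E T : Finset α) : ℝ := p ^ #T * (1 - p) ^ #(E \ T)

/-- The probability that the `p`-random subset of `E` satisfies `P`. -/
noncomputable def bernProb (p : ℝ) (E : Finset α) (P : Finset α → Prop) : ℝ :=
  ∑ T ∈ E.powerset with P T, bernWeight p E T

/-- The expectation of `g` at the `p`-random subset of `E`. -/
noncomputable def bernMean (p : ℝ) (E : Finset α) (g : Finset α → ℝ) : ℝ :=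
  ∑ T ∈ E.powerset, bernWeight p E T * g T

lemma bernProb_eq_sum (p : ℝ) (E : Finset α) (P : Finset α → Prop) [DecidablePred P] :
    bernProb p E P = ∑ T ∈ E.powerset with P T, bernWeight p E T := by
  unfold bernProb
  congr

lemma bernWeight_nonneg (hp : 0 ≤ p) (hp₁ : p ≤ 1) (E T : Finset α) : 0 ≤ bernWeight p E T :=
  mul_nonneg (pow_nonneg hp _) (pow_nonneg (sub_nonneg.2 hp₁) _)

lemma bernProb_nonneg (hp : 0 ≤ p) (hp₁ : p ≤ 1) (E : Finset α) (P : Finset α → Prop) :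
    0 ≤ bernProb p E P :=
  Finset.sum_nonneg fun T _ => bernWeight_nonneg hp hp₁ E T

lemma bernProb_mono (hp : 0 ≤ p) (hp₁ : p ≤ 1) {P Q : Finset α → Prop}
    (h : ∀ T ⊆ E, P T → Q T) : bernProb p E P ≤ bernProb p E Q := by
  refine Finset.sum_le_sum_of_subset_of_nonneg (fun T hT => ?_)
    fun T _ _ => bernWeight_nonneg hp hp₁ E T
  rw [Finset.mem_filter, Finset.mem_powerset] at hT ⊢
  exact ⟨hT.1, h T hT.1 hT.2⟩

lemma bernProb_or_le (hp : 0 ≤ p) (hp₁ : p ≤ 1) (P Q : Finset α → Prop) :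
    bernProb p E (fun T => P T ∨ Q T) ≤ bernProb p E P + bernProb p E Q := by
  simp only [bernProb_eq_sum, Finset.filter_or]
  refine le_of_add_le_of_nonneg_left (Finset.sum_union_inter).le ?_
  exact Finset.sum_nonneg fun T _ => bernWeight_nonneg hp hp₁ E T

lemma bernProb_exists_mem_le {ι : Type*} (hp : 0 ≤ p) (hp₁ : p ≤ 1) (I : Finset ι)
    (P : ι → Finset α → Prop) :
    bernProb p E (fun T => ∃ i ∈ I, P i T) ≤ ∑ i ∈ I, bernProb p E (P i) := by
  classical
  induction I using Finset.induction_on with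
  | empty => simp [bernProb]
  | insert a s ha ih =>
    rw [Finset.sum_insert ha]
    simp only [Finset.exists_mem_insert]
    exact (bernProb_or_le hp hp₁ _ _).trans (by gcongr)

lemma bernMean_sum {ι : Type*} (p : ℝ) (E : Finset α) (I : Finset ι) (g : ι → Finset α → ℝ) :
    bernMean p E (fun T => ∑ i ∈ I, g i T) = ∑ i ∈ I, bernMean p E (g i) := by
  simp only [bernMean, Finset.mul_sum]
  exact Finset.sum_comm

lemma bernMean_ite (p : ℝ) (E : Finset α) (P : Finset α → Prop) [DecidablePred P] :
    bernMean p E (fun T => if P T then 1 else 0) = bernProb p E P := by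
  simp only [bernMean, bernProb_eq_sum, Finset.sum_filter, mul_ite, mul_one, mul_zero]

lemma bernMean_prod (p : ℝ) (E : Finset α) (c : α → ℝ) :
    bernMean p E (fun T => ∏ e ∈ T, c e) = ∏ e ∈ E, (p * c e + (1 - p)) := by
  rw [Finset.prod_add]
  refine Finset.sum_congr rfl fun T _ => ?_
  rw [Finset.prod_mul_distrib, Finset.prod_const, Finset.prod_const, bernWeight]
  ring

lemma bernProb_true (p : ℝ) (E : Finset α) : bernProb p E (fun _ => True) = 1 := by
  simpa [bernProb, bernMean] using bernMean_prod p E 1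

lemma bernProb_eq_one_sub (p : ℝ) (E : Finset α) (P : Finset α → Prop) :
    bernProb p E P = 1 - bernProb p E (fun T => ¬ P T) := by
  simp only [eq_sub_iff_add_eq, ← bernProb_true p E, bernProb_eq_sum,
    Finset.sum_filter_add_sum_filter_not, Finset.filter_true]

lemma exists_subset_of_bernProb_not_lt_one {P : Finset α → Prop}
    (h : bernProb p E (fun T => ¬ P T) < 1) : ∃ T ⊆ E, P T := by
  by_contra! hnot
  have hall : ∀ T ∈ E.powerset, ¬P T := fun T hT => hnot T (Finset.mem_powerset.1 hT)
  refine h.ne ?_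
  rw [bernProb_eq_sum, Finset.filter_true_of_mem hall, ← bernProb_true p E, bernProb_eq_sum,
    Finset.filter_true]

lemma bernProb_map {β : Type*} [DecidableEq β] (p : ℝ) (E : Finset α) (f : α ↪ β)
    (P : Finset β → Prop) :
    bernProb p (E.map f) P = bernProb p E fun T => P (T.map f) := by
  symm
  refine Finset.sum_nbij (Finset.map f) (fun T => ?_) (Finset.map_injective f).injOn
    (fun U hU => ?_) fun T _ => ?_
  · simp [Finset.map_subset_map]
  · simp only [Finset.coe_filter, Finset.mem_powerset, Finset.subset_map_iff,
      Set.mem_ofPred_eq] at hU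
    obtain ⟨⟨T, hT, rfl⟩, hP⟩ := hU
    exact ⟨T, by simpa using ⟨hT, hP⟩, rfl⟩
  · simp [bernWeight, ← Finset.map_sdiff]

lemma bernProb_superset_and (p : ℝ) (hS : S ⊆ E) (P : Finset α → Prop) :
    bernProb p E (fun T => S ⊆ T ∧ P (T \ S)) = p ^ #S * bernProb p (E \ S) P := by
  rw [bernProb_eq_sum, bernProb_eq_sum, Finset.mul_sum]
  refine Finset.sum_bij' (fun T _ => T \ S) (fun U _ => U ∪ S) ?_ ?_ ?_ ?_ ?_
  · intro T hT
    simp only [Finset.mem_filter, Finset.mem_powerset] at hT ⊢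
    exact ⟨Finset.sdiff_subset_sdiff hT.1 subset_rfl, hT.2.2⟩
  · intro U hU
    simp only [Finset.mem_filter, Finset.mem_powerset, Finset.subset_sdiff] at hU ⊢
    rw [Finset.union_sdiff_cancel_right hU.1.2]
    exact ⟨Finset.union_subset hU.1.1 hS, Finset.subset_union_right, hU.2⟩
  · intro T hT
    exact Finset.sdiff_union_of_subset (Finset.mem_filter.1 hT).2.1
  · intro U hU
    simp only [Finset.mem_filter, Finset.mem_powerset, Finset.subset_sdiff] at hU
    exact Finset.union_sdiff_cancel_right hU.1.2
  · intro T hT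
    have hST : S ⊆ T := (Finset.mem_filter.1 hT).2.1
    rw [bernWeight, bernWeight, sdiff_sdiff_sdiff_cancel_right hST,
      ← Finset.card_sdiff_add_card_eq_card hST]
    ring

lemma bernProb_superset (p : ℝ) (hS : S ⊆ E) : bernProb p E (fun T => S ⊆ T) = p ^ #S := by
  simpa [bernProb_true] using bernProb_superset_and p hS fun _ => True

lemma bernProb_superset_of_not_subset (p : ℝ) (hS : ¬S ⊆ E) :
    bernProb p E (fun T => S ⊆ T) = 0 := by
  rw [bernProb_eq_sum, Finset.filter_false_of_mem, Finset.sum_empty]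
  exact fun T hT hST => hS (hST.trans (Finset.mem_powerset.1 hT))

lemma bernProb_mul_le_bernMean (hp : 0 ≤ p) (hp₁ : p ≤ 1) {g : Finset α → ℝ} (hg : ∀ T, 0 ≤ g T)
    (a : ℝ) : bernProb p E (fun T => a ≤ g T) * a ≤ bernMean p E g := by
  rw [bernProb, Finset.sum_mul]
  calc ∑ T ∈ E.powerset with a ≤ g T, bernWeight p E T * a
      ≤ ∑ T ∈ E.powerset with a ≤ g T, bernWeight p E T * g T :=
        Finset.sum_le_sum fun T hT => mul_le_mul_of_nonneg_left (Finset.mem_filter.1 hT).2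
          (bernWeight_nonneg hp hp₁ E T)
    _ ≤ bernMean p E g := Finset.sum_le_sum_of_subset_of_nonneg (Finset.filter_subset _ _)
        fun T _ _ => mul_nonneg (bernWeight_nonneg hp hp₁ E T) (hg T)

variable {m : α → ℝ} {b : ℝ}

lemma bernMean_exp_mul_sum_le (hp : 0 ≤ p) (hp₁ : p ≤ 1) (hm : ∀ e, 0 ≤ m e) (hmb : ∀ e, m e ≤ b)
    {t : ℝ} (ht : |t| * b ≤ 1) :
    bernMean p E (fun T => Real.exp (t * ∑ e ∈ T, m e)) ≤
      Real.exp (p * (t + b * t ^ 2) * ∑ e ∈ E, m e) := by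
  have hfactor (e : α) :
      p * Real.exp (t * m e) + (1 - p) ≤ Real.exp (p * (t + b * t ^ 2) * m e) := by
    have habs : |t * m e| ≤ 1 := by
      rw [abs_mul, abs_of_nonneg (hm e)]
      exact (mul_le_mul_of_nonneg_left (hmb e) (abs_nonneg t)).trans ht
    have hexp := (abs_le.1 (Real.abs_exp_sub_one_sub_id_le habs)).2
    have hsq : (t * m e) ^ 2 ≤ b * t ^ 2 * m e := by
      calc (t * m e) ^ 2 = m e * t ^ 2 * m e := by ring
        _ ≤ b * t ^ 2 * m e := by gcongr; exacts [hm e, hmb e]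
    calc p * Real.exp (t * m e) + (1 - p)
        ≤ p * (1 + t * m e + b * t ^ 2 * m e) + (1 - p) := by gcongr; linarith
      _ = p * (t + b * t ^ 2) * m e + 1 := by ring
      _ ≤ _ := Real.add_one_le_exp _
  simp only [Finset.mul_sum, Real.exp_sum]
  rw [bernMean_prod]
  have : 0 ≤ 1 - p := sub_nonneg.2 hp₁
  exact Finset.prod_le_prod (fun e _ => by positivity) fun e _ => hfactor e

lemma bernProb_le_mul_deviation_le (hp : 0 ≤ p) (hp₁ : p ≤ 1) (hm : ∀ e, 0 ≤ m e)
    (hmb : ∀ e, m e ≤ b) {t : ℝ} (ht : |t| * b ≤ 1) (a : ℝ) :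
    bernProb p E (fun T => a ≤ t * (∑ e ∈ T, m e - p * ∑ e ∈ E, m e)) ≤
      Real.exp (b * t ^ 2 * (p * ∑ e ∈ E, m e) - a) := by
  set W := ∑ e ∈ E, m e
  have hevent : (fun T => a ≤ t * (∑ e ∈ T, m e - p * W)) =
      fun T => Real.exp (a + t * (p * W)) ≤ Real.exp (t * ∑ e ∈ T, m e) := by
    ext T
    rw [Real.exp_le_exp, mul_sub, le_sub_iff_add_le]
  have hmarkov := bernProb_mul_le_bernMean (E := E) hp hp₁
    (fun T => (Real.exp_pos (t * ∑ e ∈ T, m e)).le) (Real.exp (a + t * (p * W)))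
  rw [hevent, ← mul_le_mul_iff_left₀ (Real.exp_pos (a + t * (p * W))), ← Real.exp_add]
  refine (hmarkov.trans (bernMean_exp_mul_sum_le hp hp₁ hm hmb ht)).trans_eq ?_
  congr 1
  ring

/-- Chernoff's bound, with the exponential moments taken at `± s / (2b)`. -/
lemma bernProb_deviation_le (hp : 0 ≤ p) (hp₁ : p ≤ 1) (hm : ∀ e, 0 ≤ m e) (hb : 0 < b)
    (hmb : ∀ e, m e ≤ b) {M s : ℝ} (hM : ∑ e ∈ E, m e ≤ M) (hs : 0 < s) (hs₂ : s ≤ 2) :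
    bernProb p E (fun T => s * (p * M) ≤ |∑ e ∈ T, m e - p * ∑ e ∈ E, m e|) ≤
      2 * Real.exp (-(s ^ 2 / (4 * b) * (p * M))) := by
  set t := s / (2 * b) with ht
  have ht₀ : 0 < t := by positivity
  have htb : |t| * b ≤ 1 := by
    rw [abs_of_pos ht₀, ht, div_mul_eq_mul_div, mul_div_mul_right _ _ hb.ne']
    linarith
  have htail (u : ℝ) (hu : |u| = t) :
      bernProb p E (fun T => t * (s * (p * M)) ≤ u * (∑ e ∈ T, m e - p * ∑ e ∈ E, m e)) ≤
        Real.exp (-(s ^ 2 / (4 * b) * (p * M))) := by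
    have hub : |u| * b ≤ 1 := by rwa [hu, ← abs_of_pos ht₀]
    refine (bernProb_le_mul_deviation_le hp hp₁ hm hmb hub _).trans (Real.exp_le_exp.2 ?_)
    rw [← sq_abs u, hu]
    calc b * t ^ 2 * (p * ∑ e ∈ E, m e) - t * (s * (p * M))
        ≤ b * t ^ 2 * (p * M) - t * (s * (p * M)) := by gcongr
      _ = _ := by rw [ht]; field_simp; ring
  calc bernProb p E (fun T => s * (p * M) ≤ |∑ e ∈ T, m e - p * ∑ e ∈ E, m e|)
      ≤ bernProb p E (fun T =>
          t * (s * (p * M)) ≤ t * (∑ e ∈ T, m e - p * ∑ e ∈ E, m e) ∨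
          t * (s * (p * M)) ≤ -t * (∑ e ∈ T, m e - p * ∑ e ∈ E, m e)) := by
        refine bernProb_mono hp hp₁ fun T _ hT => ?_
        rwa [neg_mul_comm, mul_le_mul_iff_right₀ ht₀, mul_le_mul_iff_right₀ ht₀, ← le_abs]
    _ ≤ _ := bernProb_or_le hp hp₁ _ _
    _ ≤ _ := by
        rw [two_mul]
        have hneg : |-t| = t := by rw [abs_neg, abs_of_pos ht₀]
        exact add_le_add (htail t (abs_of_pos ht₀)) (htail (-t) hneg)

end RandomSubset

/-! ### Edge counts of sets of ordered pairs -/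

section PairCount

open scoped Finset

variable {V : Type*} [DecidableEq V] {E S T T' : Finset (Sym2 V)} {Q Q' : Finset (V × V)}

/-- The number of ordered pairs in `Q` that are joined by an edge of `T`. An edge counts twice if
both of its orientations lie in `Q`. -/
def pairCount (T : Finset (Sym2 V)) (Q : Finset (V × V)) : ℕ := #{z ∈ Q | s(z.1, z.2) ∈ T}

lemma pairCount_le_pairCount (h : ∀ z ∈ Q, s(z.1, z.2) ∈ T → z ∈ Q' ∧ s(z.1, z.2) ∈ T') :
    pairCount T Q ≤ pairCount T' Q' :=
  Finset.card_le_card fun z hz => Finset.mem_filter.2 <|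
    h z (Finset.mem_filter.1 hz).1 (Finset.mem_filter.1 hz).2

lemma pairCount_le_card (T : Finset (Sym2 V)) (Q : Finset (V × V)) : pairCount T Q ≤ #Q :=
  Finset.card_filter_le _ _

lemma pairCount_le_sdiff_add (T S : Finset (Sym2 V)) (Q : Finset (V × V)) :
    pairCount T Q ≤ pairCount (T \ S) Q + pairCount S Q := by
  refine (Finset.card_le_card fun z hz => ?_).trans (Finset.card_union_le _ _)
  simp only [Finset.mem_filter, Finset.mem_union, Finset.mem_sdiff] at hz ⊢
  tauto

lemma sum_card_filter_mk_eq (T : Finset (Sym2 V)) (Q : Finset (V × V)) :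
    ∑ e ∈ T, #{z ∈ Q | s(z.1, z.2) = e} = pairCount T Q := by
  have hmaps : ({z ∈ Q | s(z.1, z.2) ∈ T} : Set (V × V)).MapsTo (fun z => s(z.1, z.2)) T :=
    fun z hz => hz.2
  rw [← Finset.coe_filter] at hmaps
  rw [pairCount, Finset.card_eq_sum_card_fiberwise hmaps]
  refine Finset.sum_congr rfl fun e he => congr_arg Finset.card ?_
  rw [Finset.filter_filter]
  exact Finset.filter_congr fun z _ => ⟨fun h => ⟨h ▸ he, h⟩, And.right⟩

lemma filter_mk_eq_subset_pair (Q : Finset (V × V)) (a b : V) :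
    {z ∈ Q | s(z.1, z.2) = s(a, b)} ⊆ {(a, b), (b, a)} := fun z hz => by
  simpa [Prod.ext_iff] using (Finset.mem_filter.1 hz).2

lemma card_filter_mk_eq_le_two (Q : Finset (V × V)) (e : Sym2 V) :
    #{z ∈ Q | s(z.1, z.2) = e} ≤ 2 := by
  induction e with
  | h a b => exact (Finset.card_le_card (filter_mk_eq_subset_pair Q a b)).trans Finset.card_le_two

lemma pairCount_le_two_mul_card (T : Finset (Sym2 V)) (Q : Finset (V × V)) :
    pairCount T Q ≤ 2 * #T := by
  rw [← sum_card_filter_mk_eq, mul_comm]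
  exact Finset.sum_le_card_nsmul _ _ _ fun e _ => card_filter_mk_eq_le_two Q e

lemma pairCount_univ [Fintype V] (hT : ∀ e ∈ T, ¬e.IsDiag) : pairCount T Finset.univ = 2 * #T := by
  rw [← sum_card_filter_mk_eq, mul_comm, ← smul_eq_mul]
  refine Finset.sum_eq_card_nsmul fun e he => ?_
  have hdiag := hT e he
  induction e with
  | h a b =>
    have hpair : ({z | s(z.1, z.2) = s(a, b)} : Finset (V × V)) = {(a, b), (b, a)} := by
      ext z
      simp [Prod.ext_iff]
    rw [hpair, Finset.card_pair]
    exact fun h => hdiag (Sym2.mk_isDiag_iff.2 (Prod.ext_iff.1 h).1)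

variable {p M s : ℝ}

lemma bernProb_pairCount_deviation_le (hp : 0 ≤ p) (hp₁ : p ≤ 1) (hM : pairCount E Q ≤ M)
    (hs : 0 < s) (hs₂ : s ≤ 2) :
    bernProb p E (fun T => s * (p * M) ≤ |(pairCount T Q : ℝ) - p * pairCount E Q|) ≤
      2 * Real.exp (-(s ^ 2 / 8 * (p * M))) := by
  have hsum (T : Finset (Sym2 V)) :
      (pairCount T Q : ℝ) = ∑ e ∈ T, (#{z ∈ Q | s(z.1, z.2) = e} : ℝ) := by
    rw [← sum_card_filter_mk_eq, Nat.cast_sum]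
  have htwo (e : Sym2 V) : (#{z ∈ Q | s(z.1, z.2) = e} : ℝ) ≤ 2 :=
    mod_cast card_filter_mk_eq_le_two Q e
  have hdev := bernProb_deviation_le hp hp₁ (fun _ => Nat.cast_nonneg _) two_pos htwo
    (hsum E ▸ hM) hs hs₂
  norm_num only at hdev
  simpa only [hsum] using hdev

variable [Fintype V]

lemma pairCount_le_pairCount_univ (T : Finset (Sym2 V)) (Q : Finset (V × V)) :
    pairCount T Q ≤ pairCount T Finset.univ :=
  pairCount_le_pairCount fun _ _ h => ⟨Finset.mem_univ _, h⟩

/-- `S` is a subset of `T` whose edge count over every rectangle `A ×ˢ B` is within `d` of `p` times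
that of `T`, as for a typical random subset of `T` of density `p`. -/
structure IsSample (p d : ℝ) (S T : Finset (Sym2 V)) : Prop where
  subset : S ⊆ T
  abs_sub_lt : ∀ A B : Finset V, |(pairCount S (A ×ˢ B) : ℝ) - p * pairCount T (A ×ˢ B)| < d

lemma bernProb_not_isSample_le (hp : 0 ≤ p) (hp₁ : p ≤ 1)
    (hM : pairCount E Finset.univ ≤ M) (hs : 0 < s) (hs₂ : s ≤ 2) :
    bernProb p E (fun T => ¬IsSample p (s * (p * M)) T E) ≤
      4 ^ Fintype.card V * (2 * Real.exp (-(s ^ 2 / 8 * (p * M)))) := by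
  have hMQ (Q : Finset (V × V)) : (pairCount E Q : ℝ) ≤ M :=
    (Nat.cast_le.2 (pairCount_le_pairCount_univ E Q)).trans hM
  have hcard : (#(Finset.univ : Finset (Finset V × Finset V)) : ℝ) = 4 ^ Fintype.card V := by
    rw [Finset.card_univ, Fintype.card_prod, Fintype.card_finset, ← mul_pow]
    norm_num
  calc _ ≤ bernProb p E (fun T => ∃ R ∈ (Finset.univ : Finset (Finset V × Finset V)),
          s * (p * M) ≤ |(pairCount T (R.1 ×ˢ R.2) : ℝ) - p * pairCount E (R.1 ×ˢ R.2)|) := by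
        refine bernProb_mono hp hp₁ fun T hT h => ?_
        contrapose! h
        exact ⟨hT, fun A B => h (A, B) (Finset.mem_univ _)⟩
    _ ≤ _ := bernProb_exists_mem_le hp hp₁ _ _
    _ ≤ _ := Finset.sum_le_card_nsmul _ _ _ fun R _ =>
        bernProb_pairCount_deviation_le hp hp₁ (hMQ _) hs hs₂
    _ = _ := by rw [nsmul_eq_mul, hcard]

lemma exists_isSample (hp : 0 ≤ p) (hp₁ : p ≤ 1)
    (hM : pairCount E Finset.univ ≤ M) (hs : 0 < s) (hs₂ : s ≤ 2)
    (hsmall : 4 ^ Fintype.card V * (2 * Real.exp (-(s ^ 2 / 8 * (p * M)))) < 1) :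
    ∃ S, IsSample p (s * (p * M)) S E :=
  let ⟨S, _, hS⟩ := exists_subset_of_bernProb_not_lt_one
    ((bernProb_not_isSample_le hp hp₁ hM hs hs₂).trans_lt hsmall)
  ⟨S, hS⟩

lemma bernProb_superset_and_pairCount_sdiff_le (hp : 0 ≤ p) (hp₁ : p ≤ 1) (hSE : S ⊆ E)
    (hM : pairCount E Finset.univ ≤ M) (hs : 0 < s) (hs₂ : s ≤ 2) :
    bernProb p E (fun T => S ⊆ T ∧ p * #Q + s * (p * M) ≤ pairCount (T \ S) Q) ≤
      p ^ #S * (2 * Real.exp (-(s ^ 2 / 8 * (p * M)))) := by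
  have hMQ : (pairCount (E \ S) Q : ℝ) ≤ M := by
    refine le_trans (Nat.cast_le.2 (pairCount_le_pairCount fun z _ h => ?_)) hM
    exact ⟨Finset.mem_univ z, Finset.sdiff_subset h⟩
  rw [bernProb_superset_and p hSE fun U => p * #Q + s * (p * M) ≤ pairCount U Q]
  gcongr
  refine (bernProb_mono hp hp₁ fun U _ h => ?_).trans
    (bernProb_pairCount_deviation_le hp hp₁ hMQ hs hs₂)
  have hQ : p * pairCount (E \ S) Q ≤ p * #Q := by
    gcongr
    exact pairCount_le_card _ _
  exact le_abs.2 (Or.inl (by linarith))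

/-- A union bound over the small subsets `S` of the random edge set: a candidate `S` has
probability `p ^ #S` of being present, and this factor pays for the number of candidates. -/
lemma bernProb_exists_sparse_le {ι : Type*} {η m : ℝ} (hp : 0 ≤ p) (hp₁ : p ≤ 1) (hη : 0 < η)
    (hη₁ : η ≤ 1) (hM : pairCount E Finset.univ ≤ M) (hs : 0 < s) (hs₂ : s ≤ 2) (I : Finset ι)
    (Q : Finset (Sym2 V) → ι → Finset (V × V)) :
    bernProb p E (fun T => ∃ S ⊆ T, #S ≤ m ∧ ∃ i ∈ I,
        p * #(Q S i) + s * (p * M) ≤ pairCount (T \ S) (Q S i)) ≤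
      #I * (2 * Real.exp (m * Real.log (1 / η) + η * p * #E - s ^ 2 / 8 * (p * M))) := by
  set c := 2 * Real.exp (-(s ^ 2 / 8 * (p * M))) with hc
  calc _ ≤ bernProb p E (fun T => ∃ q ∈ {S ∈ E.powerset | #S ≤ m} ×ˢ I,
          q.1 ⊆ T ∧ p * #(Q q.1 q.2) + s * (p * M) ≤ pairCount (T \ q.1) (Q q.1 q.2)) := by
        refine bernProb_mono hp hp₁ fun T hT ⟨S, hS, hm, i, hi, h⟩ => ⟨(S, i), ?_, hS, h⟩
        exact Finset.mem_product.2
          ⟨Finset.mem_filter.2 ⟨Finset.mem_powerset.2 (hS.trans hT), hm⟩, hi⟩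
    _ ≤ _ := bernProb_exists_mem_le hp hp₁ _ _
    _ ≤ ∑ q ∈ {S ∈ E.powerset | #S ≤ m} ×ˢ I, p ^ #q.1 * c := by
        refine Finset.sum_le_sum fun q hq => ?_
        have hqE := (Finset.mem_filter.1 (Finset.mem_product.1 hq).1).1
        exact bernProb_superset_and_pairCount_sdiff_le hp hp₁ (Finset.mem_powerset.1 hqE) hM hs hs₂
    _ = #I * ((∑ S ∈ E.powerset with #S ≤ m, p ^ #S) * c) := by
        rw [Finset.sum_product, Finset.sum_mul, Finset.mul_sum]
        exact Finset.sum_congr rfl fun S _ => by simp only [Finset.sum_const, nsmul_eq_mul]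
    _ ≤ #I * (Real.exp (m * Real.log (1 / η) + η * p * #E) * c) := by
        gcongr
        exact sum_pow_card_le hp hη hη₁ E m
    _ = _ := by
        rw [hc, mul_left_comm (Real.exp _), ← Real.exp_add, ← sub_eq_add_neg]

end PairCount

/-! ### Codegrees and the second moment -/

section EdgeIndicator

open scoped Finset

variable {V : Type*} [DecidableEq V]

/-- The indicator function of the ordered pairs that are joined by an edge of `T`. -/
noncomputable def edgeIndicator (T : Finset (Sym2 V)) (x y : V) : ℝ :=
  if s(x, y) ∈ T then 1 else 0

lemma edgeIndicator_map {W : Type*} [DecidableEq W] (f : V ↪ W) (T : Finset (Sym2 V)) (x y : V) :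
    edgeIndicator (T.map f.sym2Map) (f x) (f y) = edgeIndicator T x y := by
  simp only [edgeIndicator]
  congr 1
  exact propext (Finset.mem_map' f.sym2Map (a := s(x, y)))

lemma edgeIndicator_nonneg (T : Finset (Sym2 V)) (x y : V) : 0 ≤ edgeIndicator T x y := by
  unfold edgeIndicator
  positivity

lemma edgeIndicator_mono {T T' : Finset (Sym2 V)} (h : T ⊆ T') (x y : V) :
    edgeIndicator T x y ≤ edgeIndicator T' x y := by
  unfold edgeIndicator
  split_ifs with h₁ h₂
  exacts [le_rfl, absurd (h h₁) h₂, zero_le_one, le_rfl]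

lemma rectWeight_edgeIndicator (T : Finset (Sym2 V)) (A B : Finset V) :
    rectWeight (edgeIndicator T) A B = pairCount T (A ×ˢ B) := by
  rw [rectWeight, ← Finset.sum_product', pairCount, Finset.card_filter]
  push_cast
  rfl

/-- The edges of the closed walk `x y x' y'`. -/
def walkEdges (x x' y y' : V) : Finset (Sym2 V) := {s(x, y), s(x, y'), s(x', y), s(x', y')}

lemma pow_card_walkEdges_le {p : ℝ} (hp : 0 ≤ p) {x x' y y' : V}
    (hloop : ∀ e ∈ walkEdges x x' y y', ¬e.IsDiag) :
    p ^ #(walkEdges x x' y y') ≤ p ^ 4 + (if x = x' then p ^ 2 else 0) +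
      (if y = y' then p ^ 2 else 0) + (if x = x' then if y = y' then p else 0 else 0) := by
  have h₂ := pow_nonneg hp 2
  have h₄ := pow_nonneg hp 4
  obtain ⟨hxy, hxy', hx'y, hx'y'⟩ : x ≠ y ∧ x ≠ y' ∧ x' ≠ y ∧ x' ≠ y' := by
    simpa [walkEdges] using hloop
  rcases eq_or_ne x x' with rfl | hx <;> rcases eq_or_ne y y' with rfl | hy
  · have hcard : #(walkEdges x x y y) = 1 := by simp [walkEdges]
    simp only [hcard, if_true]
    linarith
  · have hcard : #(walkEdges x x y y') = 2 := by
      simp [walkEdges, hy, hxy']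
    simp only [hcard, if_true, if_neg hy]
    linarith
  · have hcard : #(walkEdges x x' y y) = 2 := by
      simp [walkEdges, hx, hxy]
    simp only [hcard, if_true, if_neg hx]
    linarith
  · have hcard : #(walkEdges x x' y y') = 4 := by
      simp only [walkEdges, Finset.card_insert_eq_ite, Finset.mem_insert, Finset.mem_singleton,
        Finset.card_singleton, Sym2.eq_iff]
      grind
    simp only [hcard, if_neg hx, if_neg hy]
    linarith

end EdgeIndicator

section CodegreeEnergy

variable {V : Type*} [Fintype V]

/-- The sum of the squares of the weighted codegrees of all pairs of columns. For the indicator of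
the edges of a graph this is the number of closed walks of length four. -/
noncomputable def codegreeEnergy (f : V → V → ℝ) : ℝ := ∑ y, ∑ y', (∑ x, f x y * f x y') ^ 2

lemma codegreeEnergy_nonneg (f : V → V → ℝ) : 0 ≤ codegreeEnergy f := by
  unfold codegreeEnergy
  positivity

lemma codegreeEnergy_const_mul (c : ℝ) (f : V → V → ℝ) :
    codegreeEnergy (fun x y => c * f x y) = c ^ 4 * codegreeEnergy f := by
  simp only [codegreeEnergy, mul_mul_mul_comm c, ← Finset.mul_sum, mul_pow]
  ring

lemma codegreeEnergy_mono {f g : V → V → ℝ} (hf : ∀ x y, 0 ≤ f x y) (hfg : ∀ x y, f x y ≤ g x y) :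
    codegreeEnergy f ≤ codegreeEnergy g := by
  unfold codegreeEnergy
  gcongr with y _ y' _ x
  · exact Finset.sum_nonneg fun x _ => mul_nonneg (hf x y) (hf x y')
  · exact hf x y'
  · exact (hf x y).trans (hfg x y)
  · exact hfg x y
  · exact hfg x y'

lemma codegreeEnergy_comp_perm (f : V → V → ℝ) (α β : Equiv.Perm V) :
    codegreeEnergy (fun x y => f (α x) (β y)) = codegreeEnergy f := by
  have hcodegree (y y' : V) :
      ∑ x, f (α x) (β y) * f (α x) (β y') = ∑ x, f x (β y) * f x (β y') :=
    Equiv.sum_comp α fun x => f x (β y) * f x (β y')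
  have hrow (y : V) :
      ∑ y', (∑ x, f x (β y) * f x (β y')) ^ 2 = ∑ y', (∑ x, f x (β y) * f x y') ^ 2 :=
    Equiv.sum_comp β fun y' => (∑ x, f x (β y) * f x y') ^ 2
  simp only [codegreeEnergy, hcodegree, hrow]
  exact Equiv.sum_comp β fun y => ∑ y', (∑ x, f x y * f x y') ^ 2

lemma sum_sq_sum_mul_eq (f g : V → V → ℝ) :
    ∑ x, ∑ x', (∑ y, f x y * g x' y) ^ 2 =
      ∑ y, ∑ y', (∑ x, f x y * f x y') * ∑ x', g x' y * g x' y' := by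
  simp only [sq, Finset.sum_mul_sum]
  calc ∑ x, ∑ x', ∑ y, ∑ y', f x y * g x' y * (f x y' * g x' y')
      = ∑ x, ∑ y, ∑ y', ∑ x', f x y * g x' y * (f x y' * g x' y') :=
        Finset.sum_congr rfl fun x _ => Finset.sum_comm.trans <|
          Finset.sum_congr rfl fun y _ => Finset.sum_comm
    _ = ∑ y, ∑ y', ∑ x, ∑ x', f x y * g x' y * (f x y' * g x' y') :=
        Finset.sum_comm.trans <| Finset.sum_congr rfl fun y _ => Finset.sum_comm
    _ = ∑ y, ∑ y', ∑ x, ∑ x', f x y * f x y' * (g x' y * g x' y') := by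
        simp only [mul_mul_mul_comm]

lemma sum_sq_sum_mul_comp_perm_le (f : V → V → ℝ) (α β : Equiv.Perm V) :
    ∑ x, ∑ x', (∑ y, f x y * f (α x') (β y)) ^ 2 ≤ codegreeEnergy f := by
  set g : V → V → ℝ := fun x y => f (α x) (β y)
  calc ∑ x, ∑ x', (∑ y, f x y * g x' y) ^ 2
      = ∑ y, ∑ y', (∑ x, f x y * f x y') * ∑ x', g x' y * g x' y' := sum_sq_sum_mul_eq f g
    _ ≤ ∑ y, ∑ y', ((∑ x, f x y * f x y') ^ 2 / 2 + (∑ x, g x y * g x y') ^ 2 / 2) := by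
        gcongr with y _ y' _
        linarith [two_mul_le_add_sq (∑ x, f x y * f x y') (∑ x, g x y * g x y')]
    _ = codegreeEnergy f / 2 + codegreeEnergy g / 2 := by
        simp only [Finset.sum_add_distrib, ← Finset.sum_div, codegreeEnergy]
    _ = codegreeEnergy f := by rw [codegreeEnergy_comp_perm, add_halves]

variable [DecidableEq V]

lemma codegreeEnergy_edgeIndicator_map (σ : Equiv.Perm V) (T : Finset (Sym2 V)) :
    codegreeEnergy (edgeIndicator (T.map σ.toEmbedding.sym2Map)) =
      codegreeEnergy (edgeIndicator T) := by
  rw [← codegreeEnergy_comp_perm _ σ σ]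
  congr 1
  ext x y
  exact edgeIndicator_map σ.toEmbedding T x y

lemma codegreeEnergy_edgeIndicator (T : Finset (Sym2 V)) :
    codegreeEnergy (edgeIndicator T) =
      ∑ y, ∑ y', ∑ x, ∑ x', if walkEdges x x' y y' ⊆ T then 1 else 0 := by
  simp only [codegreeEnergy, sq, Finset.sum_mul_sum, edgeIndicator, mul_ite, mul_one, mul_zero,
    ← ite_and, walkEdges, Finset.insert_subset_iff, Finset.singleton_subset_iff]
  refine Finset.sum_congr rfl fun y _ => Finset.sum_congr rfl fun y' _ =>
    Finset.sum_congr rfl fun x _ => Finset.sum_congr rfl fun x' _ => if_congr ?_ rfl rfl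
  tauto

variable {p : ℝ} {E : Finset (Sym2 V)}

lemma bernMean_codegreeEnergy_le (hp : 0 ≤ p) (hE : ∀ e ∈ E, ¬e.IsDiag) :
    bernMean p E (fun T => codegreeEnergy (edgeIndicator T)) ≤
      (Fintype.card V : ℝ) ^ 4 * p ^ 4 + 2 * (Fintype.card V : ℝ) ^ 3 * p ^ 2 +
        (Fintype.card V : ℝ) ^ 2 * p := by
  simp only [codegreeEnergy_edgeIndicator, bernMean_sum, bernMean_ite]
  calc _ ≤ ∑ y : V, ∑ y' : V, ∑ x : V, ∑ x' : V, (p ^ 4 + (if x = x' then p ^ 2 else 0) +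
          (if y = y' then p ^ 2 else 0) + (if x = x' then if y = y' then p else 0 else 0)) := by
        gcongr with y _ y' _ x _ x' _
        by_cases hwalk : walkEdges x x' y y' ⊆ E
        · rw [bernProb_superset p hwalk]
          exact pow_card_walkEdges_le hp fun e he => hE e (hwalk he)
        · rw [bernProb_superset_of_not_subset p hwalk]
          positivity
    _ = _ := by
        simp only [Finset.sum_add_distrib, Finset.sum_const, Finset.card_univ, nsmul_eq_mul,
          Finset.sum_ite_eq, Finset.mem_univ, if_true, ← Finset.mul_sum]
        ring

lemma bernProb_le_codegreeEnergy_le {K : ℝ} (hp : 0 < p) (hp₁ : p ≤ 1) (hE : ∀ e ∈ E, ¬e.IsDiag)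
    (hK : 0 < K) (hnp : 1 ≤ Fintype.card V * p ^ 2) :
    bernProb p E (fun T => K * (p * Fintype.card V) ^ 4 ≤ codegreeEnergy (edgeIndicator T)) ≤
      4 / K := by
  set n : ℝ := (Fintype.card V : ℝ)
  have hn : 0 < n := pos_of_mul_pos_left (one_pos.trans_le hnp) (sq_nonneg p)
  have hpos : 0 < (p * n) ^ 4 := by positivity
  have hone : 1 ≤ n * p := by
    refine hnp.trans ?_
    gcongr
    exact pow_le_of_le_one hp.le hp₁ two_ne_zero
  have hmean : bernMean p E (fun T => codegreeEnergy (edgeIndicator T)) ≤ 4 * (p * n) ^ 4 := by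
    have hcubic : n ^ 3 * p ^ 2 ≤ (p * n) ^ 4 := by
      calc n ^ 3 * p ^ 2 ≤ n ^ 3 * p ^ 2 * (n * p ^ 2) := le_mul_of_one_le_right (by positivity) hnp
        _ = _ := by ring
    have hquadratic : n ^ 2 * p ≤ n ^ 3 * p ^ 2 := by
      calc n ^ 2 * p ≤ n ^ 2 * p * (n * p) := le_mul_of_one_le_right (by positivity) hone
        _ = _ := by ring
    calc _ ≤ n ^ 4 * p ^ 4 + 2 * n ^ 3 * p ^ 2 + n ^ 2 * p := bernMean_codegreeEnergy_le hp.le hE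
      _ ≤ _ := by linarith [mul_pow p n 4]
  rw [le_div_iff₀ hK, ← mul_le_mul_iff_left₀ hpos, mul_assoc]
  exact (bernProb_mul_le_bernMean hp.le hp₁ (fun T => codegreeEnergy_nonneg _) _).trans hmean

end CodegreeEnergy

/-! ### From pseudorandomness to shortcuts -/

section Transfer

open scoped Finset

lemma exists_forall_rectWeight_excess {ε : ℝ} (hε : 0 < ε) (hε₁ : ε ≤ 1) :
    ∃ δ > (0 : ℝ), ∃ θ > (0 : ℝ), θ ≤ 1 ∧ ∀ K > (0 : ℝ), ∃ τ > (0 : ℝ), ∀ᶠ n : ℕ in atTop,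
      ∀ [NeZero n] (f : ZMod n → ZMod n → ℝ) (l : ℕ), l ≤ δ * n → (∀ x y, 0 ≤ f x y) →
        IsUpperUniform f (τ * n ^ 2) →
        (1 / 2 + ε) * n ^ 2 ≤ rectWeight f Finset.univ Finset.univ →
        codegreeEnergy f ≤ K * n ^ 4 →
        ∃ X J : Finset (ZMod n),
          #(openPairs (fun x y => f x y ≠ 0) l X J) + θ * n ^ 2 ≤ rectWeight f X J := by
  obtain ⟨N, hN⟩ := exists_nat_ge (100 / ε)
  obtain ⟨L, hL⟩ := exists_nat_ge (8 / ε)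
  have hN₀ : (0 : ℝ) < N := (by positivity : 0 < 100 / ε).trans_le hN
  rw [div_le_iff₀' hε] at hN
  set κ := ε / (16 * ((L + 1) ^ 2 * N)) with hκ
  have hκ₀ : 0 < κ := by positivity
  have hκ₁ : κ ≤ 1 := by
    rw [hκ, div_le_one (by positivity)]
    have : (1 : ℝ) ≤ (L + 1) ^ 2 * N :=
      mod_cast Nat.succ_le_of_lt (Nat.mul_pos (by positivity) (Nat.cast_pos.1 hN₀))
    linarith
  refine ⟨1 / N, by positivity, ε ^ 2 * κ / 512, by positivity, ?_, fun K hK => ?_⟩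
  · linarith [mul_le_one₀ (pow_le_one₀ hε.le hε₁ : ε ^ 2 ≤ 1) hκ₀.le hκ₁]
  set ρ := ε ^ 3 * κ ^ 3 / (4096 * K) with hρ
  have : 0 < ρ := by positivity
  refine ⟨min (ε ^ 2 * κ / 512) (ε * ρ / (16 * N)), by positivity, ?_⟩
  filter_upwards [eventually_ge_atTop (8 * N),
    tendsto_natCast_atTop_atTop.eventually_ge_atTop (1 / κ)] with n hn hκn _ f l hl hf hfD htot hK'
  refine exists_rectWeight_excess hε hε₁ hL hN (div_mul_cancel₀ _ (by positivity))
    ((div_le_iff₀' hκ₀).1 hκn) hn ?_ hK hρ ?_ ?_ hf hfD htot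
    ((sum_sq_sum_mul_comp_perm_le f (Equiv.addRight 1) (Equiv.addRight 1)).trans hK')
  · rw [Nat.le_div_iff_mul_le (Nat.cast_pos.1 hN₀)]
    rw [one_div_mul_eq_div, le_div_iff₀ hN₀] at hl
    exact_mod_cast hl
  · gcongr
    exact min_le_left _ _
  · calc _ ≤ ε * ρ / (16 * N) * (n : ℝ) ^ 2 := by
          gcongr
          exact min_le_right _ _
      _ = ε / 16 * n * (ρ / N * n) := by ring

section IsSample

variable {V : Type*} [DecidableEq V] {p d η d' : ℝ} {S T T' E : Finset (Sym2 V)}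

lemma IsSample.pairCount_le (h : IsSample p d S T) (hp : 0 ≤ p) (A B : Finset V) :
    pairCount S (A ×ˢ B) ≤ p * (#A * #B) + d := by
  have hcard : (pairCount T (A ×ˢ B) : ℝ) ≤ #A * #B := by
    exact_mod_cast (pairCount_le_card T (A ×ˢ B)).trans_eq (Finset.card_product A B)
  linarith [(abs_lt.1 (h.abs_sub_lt A B)).2, mul_le_mul_of_nonneg_left hcard hp]

lemma IsSample.isUpperUniform (hS : IsSample η d' S T') (hT' : T' ⊆ T) (hT : IsSample p d T E)
    (hp : 0 < p) (hη : 0 < η) :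
    IsUpperUniform (fun x y => (η * p)⁻¹ * edgeIndicator S x y) ((η * p)⁻¹ * (η * d + d')) := by
  intro A B
  rw [rectWeight_const_mul, rectWeight_edgeIndicator, inv_mul_le_iff₀ (by positivity), mul_add,
    mul_inv_cancel_left₀ (by positivity)]
  have hle : (pairCount T' (A ×ˢ B) : ℝ) ≤ pairCount T (A ×ˢ B) :=
    Nat.cast_le.2 (pairCount_le_pairCount fun _ hz h => ⟨hz, hT' h⟩)
  linarith [(abs_lt.1 (hS.abs_sub_lt A B)).2,
    mul_le_mul_of_nonneg_left (hle.trans (hT.pairCount_le hp.le A B)) hη.le]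

end IsSample

section Complete

variable {V : Type*} [Fintype V] [DecidableEq V] {n : ℕ} {p τ η θ ε : ℝ} {S T T' : Finset (Sym2 V)}

lemma pairCount_top_univ (hn : Fintype.card V = n) :
    (pairCount (⊤ : SimpleGraph V).edgeFinset Finset.univ : ℝ) = n ^ 2 - n := by
  rw [pairCount_univ fun _ => SimpleGraph.not_isDiag_of_mem_edgeFinset,
    SimpleGraph.card_edgeFinset_top_eq_card_choose_two, hn, Nat.cast_mul, Nat.cast_choose_two]
  push_cast
  ring

lemma IsSample.le_pairCount_univ (hn : Fintype.card V = n)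
    (hT : IsSample p (τ * (p * n ^ 2)) T (⊤ : SimpleGraph V).edgeFinset) (hp : 0 ≤ p)
    (hεn : 2 ≤ ε * n) :
    (1 - τ - ε / 2) * (p * n ^ 2) ≤ pairCount T Finset.univ := by
  have h := (abs_lt.1 (hT.abs_sub_lt Finset.univ Finset.univ)).1
  rw [Finset.univ_product_univ, pairCount_top_univ hn] at h
  have := mul_le_mul_of_nonneg_left hεn (by positivity : 0 ≤ p * n)
  linarith

lemma IsSample.le_rectWeight_univ (hn : Fintype.card V = n)
    (hS : IsSample η (τ * (η * (p * n ^ 2))) S T') (hT' : T' ⊆ T)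
    (hT : IsSample p (τ * (p * n ^ 2)) T (⊤ : SimpleGraph V).edgeFinset) (hp : 0 < p) (hη : 0 < η)
    (hε : 0 < ε) (hε₁ : ε ≤ 1 / 4) (hτ : 4 * τ ≤ ε) (hεn : 2 ≤ ε * n)
    (hcard : (1 / 2 + 2 * ε) * #T ≤ #T') :
    (1 / 2 + ε) * n ^ 2 ≤
      rectWeight (fun x y => (η * p)⁻¹ * edgeIndicator S x y) Finset.univ Finset.univ := by
  set D := p * (n : ℝ) ^ 2
  have hD₀ : 0 ≤ D := by positivity
  have hcount : (1 / 2 + 2 * ε) * pairCount T Finset.univ ≤ pairCount T' Finset.univ := by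
    have hdiag : ∀ e ∈ T, ¬e.IsDiag := fun e he =>
      SimpleGraph.not_isDiag_of_mem_edgeFinset (hT.subset he)
    rw [pairCount_univ hdiag, pairCount_univ fun e he => hdiag e (hT' he)]
    push_cast
    linarith
  have hsample := (abs_lt.1 (hS.abs_sub_lt Finset.univ Finset.univ)).1
  rw [Finset.univ_product_univ] at hsample
  have hdense : (1 / 2 + ε + τ) * D ≤ pairCount T' Finset.univ :=
    calc _ ≤ (1 / 2 + 2 * ε) * ((1 - τ - ε / 2) * D) := by
          rw [← mul_assoc (1 / 2 + 2 * ε)]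
          refine mul_le_mul_of_nonneg_right ?_ hD₀
          linarith [mul_nonneg hε.le (sub_nonneg.2 hε₁), mul_nonneg hε.le (sub_nonneg.2 hτ)]
      _ ≤ (1 / 2 + 2 * ε) * pairCount T Finset.univ := by
          gcongr
          exact hT.le_pairCount_univ hn hp.le hεn
      _ ≤ _ := hcount
  rw [rectWeight_const_mul, rectWeight_edgeIndicator, Finset.univ_product_univ,
    le_inv_mul_iff₀ (by positivity)]
  have := mul_le_mul_of_nonneg_left hdense hη.le
  linarith

lemma card_le_of_isUpperUniform (hn : Fintype.card V = n) (hdiag : ∀ e ∈ S, ¬e.IsDiag)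
    (hp : 0 < p)
    (hS : IsUpperUniform (fun x y => p⁻¹ * edgeIndicator S x y) (n ^ 2)) : #S ≤ p * n ^ 2 := by
  have h := hS Finset.univ Finset.univ
  rw [rectWeight_const_mul, rectWeight_edgeIndicator, Finset.univ_product_univ,
    pairCount_univ hdiag, Finset.card_univ, hn, inv_mul_le_iff₀ hp] at h
  push_cast at h
  linarith

lemma IsSample.exists_dense_isSample (hn : Fintype.card V = n)
    (hT : IsSample p (τ * (p * n ^ 2)) T (⊤ : SimpleGraph V).edgeFinset) (hT' : T' ⊆ T)
    (hcard : (1 / 2 + 2 * ε) * #T ≤ #T') (hp : 0 < p) (hη : 0 < η) (hη₁ : η ≤ 1) (hε : 0 < ε)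
    (hε₁ : ε ≤ 1 / 4) (hτ₀ : 0 < τ) (hτ : 4 * τ ≤ ε) (hεn : 2 ≤ ε * n)
    (hsmall : 4 ^ n * (2 * Real.exp (-(τ ^ 2 / 16 * η * (p * n ^ 2)))) < 1) :
    ∃ S, IsSample η (τ * (η * (p * n ^ 2))) S T' ∧ #S ≤ η * (p * n ^ 2) ∧
      IsUpperUniform (fun x y => (η * p)⁻¹ * edgeIndicator S x y) (2 * τ * n ^ 2) ∧
      (1 / 2 + ε) * n ^ 2 ≤
        rectWeight (fun x y => (η * p)⁻¹ * edgeIndicator S x y) Finset.univ Finset.univ := by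
  have hM : pairCount T' Finset.univ ≤ 2 * (p * (n : ℝ) ^ 2) :=
    calc (pairCount T' Finset.univ : ℝ) ≤ pairCount T Finset.univ :=
          Nat.cast_le.2 (pairCount_le_pairCount fun _ hz h => ⟨hz, hT' h⟩)
      _ ≤ p * (n * n) + τ * (p * n ^ 2) := by
          simpa only [Finset.univ_product_univ, Finset.card_univ, hn] using
            hT.pairCount_le hp.le Finset.univ Finset.univ
      _ = (1 + τ) * (p * n ^ 2) := by ring
      _ ≤ _ := by
          gcongr
          linarith
  obtain ⟨S, hS⟩ := exists_isSample (s := τ / 2) hη.le hη₁ hM (by linarith)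
    (by linarith) (by rw [hn]; convert hsmall using 5; ring)
  rw [show τ / 2 * (η * (2 * (p * (n : ℝ) ^ 2))) = τ * (η * (p * n ^ 2)) by ring] at hS
  have hunif := hS.isUpperUniform hT' hT hp hη
  rw [show (η * p)⁻¹ * (η * (τ * (p * (n : ℝ) ^ 2)) + τ * (η * (p * n ^ 2))) = 2 * τ * n ^ 2 by
    field_simp; ring] at hunif
  have hdiag : ∀ e ∈ S, ¬e.IsDiag := fun e he =>
    SimpleGraph.not_isDiag_of_mem_edgeFinset (hT.subset (hT' (hS.subset he)))
  refine ⟨S, hS, ?_, hunif, hS.le_rectWeight_univ hn hT' hT hp hη hε hε₁ hτ hεn hcard⟩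
  rw [← mul_assoc]
  exact card_le_of_isUpperUniform hn hdiag (by positivity)
    (hunif.mono (mul_le_of_le_one_left (by positivity) (by linarith)))

lemma codegreeEnergy_inv_mul_edgeIndicator_le {K : ℝ} (hS : S ⊆ T) (hp : 0 < p) (hη : 0 < η)
    (hK : codegreeEnergy (edgeIndicator T) ≤ K * (p * n) ^ 4) :
    codegreeEnergy (fun x y => (η * p)⁻¹ * edgeIndicator S x y) ≤ K / η ^ 4 * n ^ 4 := by
  rw [codegreeEnergy_const_mul]
  calc _ ≤ (η * p)⁻¹ ^ 4 * (K * (p * n) ^ 4) := by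
        gcongr
        exact (codegreeEnergy_mono (edgeIndicator_nonneg S) (edgeIndicator_mono hS)).trans hK
    _ = _ := by field_simp

end Complete

section Shortcut

variable {n l : ℕ} {p τ η θ ε K : ℝ} {S T T' : Finset (Sym2 (ZMod n))}

lemma mul_edgeIndicator_ne_zero {c : ℝ} (hc : c ≠ 0) (x y : ZMod n) :
    c * edgeIndicator S x y ≠ 0 ↔ s(x, y) ∈ S := by
  simp [edgeIndicator, hc]

lemma containsShortcut_of_closes {G : SimpleGraph (ZMod n)} {u v : ZMod n}
    (hS : ∀ e ∈ S, e ∈ G.edgeSet) (huv : s(u, v) ∈ G.edgeSet)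
    (h : Closes (fun x y => s(x, y) ∈ S) l u v) : ContainsShortcut l G := by
  obtain ⟨i₁, i₃, i₄, ht, rfl, h₁₃, h₁₄, hu₃⟩ := h
  refine ⟨i₁, u, i₃, i₄, ht, fun e he => ?_⟩
  simp only [shortcutEdges, Finset.coe_insert, Finset.coe_singleton, Set.mem_insert_iff,
    Set.mem_singleton_iff] at he
  rcases he with rfl | rfl | rfl | rfl
  exacts [hS _ h₁₃, hS _ h₁₄, huv, hS _ hu₃]

variable [NeZero n]

/-- The pseudorandomness of the random edge set `T` of density `p` that forces shortcuts: `T` has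
the expected number of edges in every rectangle up to `τ p n ^ 2`, and no subset of at most
`η p n ^ 2` edges determines a set of open pairs with `θ p n ^ 2` more edges than expected. -/
structure IsTypical (p τ η θ : ℝ) (T : Finset (Sym2 (ZMod n))) : Prop where
  isSample : IsSample p (τ * (p * n ^ 2)) T (⊤ : SimpleGraph (ZMod n)).edgeFinset
  pairCount_openPairs_lt : ∀ S ⊆ T, #S ≤ η * (p * n ^ 2) → ∀ l ≤ n, ∀ X J : Finset (ZMod n),
    pairCount (T \ S) (openPairs (fun x y => s(x, y) ∈ S) l X J) <
      p * #(openPairs (fun x y => s(x, y) ∈ S) l X J) + θ * (p * n ^ 2)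

/-- If no edge of `T'` closed a shortcut, all edges of `T'` in the rectangle `X ×ˢ J` would be open
pairs, of which `T` contains too few. -/
lemma IsTypical.exists_closes (hT : IsTypical p τ η (θ / 2) T) (hT' : T' ⊆ T)
    (hS : IsSample η (τ * (η * (p * n ^ 2))) S T') (hcard : #S ≤ η * (p * n ^ 2)) (hl : l ≤ n)
    (hp : 0 < p) (hη : 0 < η) (hηθ : η ≤ θ / 16) (hτθ : τ ≤ θ / 8) {X J : Finset (ZMod n)}
    (hexc : #(openPairs (fun x y => s(x, y) ∈ S) l X J) + θ * n ^ 2 ≤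
      (η * p)⁻¹ * pairCount S (X ×ˢ J)) :
    ∃ u v, s(u, v) ∈ T' ∧ Closes (fun x y => s(x, y) ∈ S) l u v := by
  by_contra! hopen
  set Q := openPairs (fun x y => s(x, y) ∈ S) l X J
  set D := p * (n : ℝ) ^ 2
  have hD : 0 < D := mul_pos hp (pow_pos (Nat.cast_pos.2 (NeZero.pos n)) 2)
  have hlower : p * #Q + (θ - τ) * D ≤ pairCount T' (X ×ˢ J) := by
    rw [le_inv_mul_iff₀ (by positivity)] at hexc
    refine le_of_mul_le_mul_left ?_ hη
    have := (abs_lt.1 (hS.abs_sub_lt X J)).2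
    linarith
  have hupper : pairCount T' (X ×ˢ J) ≤ pairCount (T \ S) Q + 2 * #S :=
    calc _ ≤ pairCount T Q := pairCount_le_pairCount fun z hz hzT =>
          ⟨Finset.mem_filter.2 ⟨hz, hopen z.1 z.2 hzT⟩, hT' hzT⟩
      _ ≤ pairCount (T \ S) Q + pairCount S Q := pairCount_le_sdiff_add T S Q
      _ ≤ _ := by
        gcongr
        exact pairCount_le_two_mul_card S Q
  have hupper' : (pairCount T' (X ×ˢ J) : ℝ) ≤ pairCount (T \ S) Q + 2 * #S := mod_cast hupper
  linarith [hT.pairCount_openPairs_lt S (hS.subset.trans hT') hcard l hl X J, mul_pos hη hD,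
    mul_le_mul_of_nonneg_right hηθ hD.le, mul_le_mul_of_nonneg_right hτθ hD.le]

lemma exists_forall_isTypical_containsShortcut (hε : 0 < ε) (hε₁ : ε ≤ 1 / 4) :
    ∃ δ > (0 : ℝ), ∃ θ > (0 : ℝ), θ ≤ 1 ∧ ∀ η > (0 : ℝ), η ≤ θ / 16 → ∀ K > (0 : ℝ),
      ∃ τ > (0 : ℝ), τ ≤ 1 ∧ ∀ᶠ n : ℕ in atTop, ∀ [NeZero n] (p : ℝ) (T : Finset (Sym2 (ZMod n)))
        (G' : SimpleGraph (ZMod n)) [Fintype G'.edgeSet], 0 < p →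
        4 ^ n * (2 * Real.exp (-(τ ^ 2 / 16 * η * (p * n ^ 2)))) < 1 →
        IsTypical p τ η (θ / 2) T → codegreeEnergy (edgeIndicator T) ≤ K * (p * n) ^ 4 →
        G'.edgeFinset ⊆ T → (1 / 2 + 2 * ε) * #T ≤ #G'.edgeFinset →
        ∀ l : ℕ, l ≤ δ * n → ContainsShortcut l G' := by
  obtain ⟨δ, hδ, θ, hθ, hθ₁, h⟩ := exists_forall_rectWeight_excess hε (by linarith)
  refine ⟨min δ 1, by positivity, θ, hθ, hθ₁, fun η hη hηθ K hK => ?_⟩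
  obtain ⟨τ, hτ, h⟩ := h (K / η ^ 4) (by positivity)
  refine ⟨min (τ / 2) (min (ε / 4) (θ / 8)), by positivity,
    (min_le_right _ _).trans ((min_le_right _ _).trans (by linarith)), ?_⟩
  filter_upwards [h, tendsto_natCast_atTop_atTop.eventually_ge_atTop (2 / ε)] with n h hn _ p T G' _
    hp hsmall hT hK hT' hcard l hl
  set τ' := min (τ / 2) (min (ε / 4) (θ / 8))
  have hτ₁ : τ' ≤ τ / 2 := min_le_left _ _
  have hτ₂ : τ' ≤ ε / 4 := (min_le_right _ _).trans (min_le_left _ _)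
  have hτ₃ : τ' ≤ θ / 8 := (min_le_right _ _).trans (min_le_right _ _)
  obtain ⟨S, hS, hScard, hunif, htot⟩ := hT.isSample.exists_dense_isSample (ZMod.card n) hT' hcard
    hp hη (by linarith) hε hε₁ (by positivity) (by linarith) ((div_le_iff₀' hε).1 hn) hsmall
  obtain ⟨X, J, hXJ⟩ := h _ l (hl.trans (by gcongr; exact min_le_left _ _))
    (fun x y => mul_nonneg (by positivity) (edgeIndicator_nonneg S x y))
    (hunif.mono (by gcongr; linarith)) htot
    (codegreeEnergy_inv_mul_edgeIndicator_le (hS.subset.trans hT') hp hη hK)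
  rw [rectWeight_const_mul, rectWeight_edgeIndicator] at hXJ
  simp only [mul_edgeIndicator_ne_zero (by positivity : (η * p)⁻¹ ≠ 0)] at hXJ
  have hln : l ≤ n :=
    Nat.cast_le.1 (hl.trans (mul_le_of_le_one_left n.cast_nonneg (min_le_right _ _)))
  obtain ⟨u, v, huv, hclose⟩ := hT.exists_closes hT' hS hScard hln hp hη hηθ hτ₃ hXJ
  exact containsShortcut_of_closes (fun e he => SimpleGraph.mem_edgeFinset.1 (hS.subset he))
    (SimpleGraph.mem_edgeFinset.1 huv) hclose

end Shortcut

end Transfer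

/-! ### Entropy estimates -/

section Estimates

lemma exists_sample_rate {θ : ℝ} (hθ : 0 < θ) (hθ₁ : θ ≤ 1) :
    ∃ η > (0 : ℝ), η ≤ θ / 8 ∧ η * Real.log (1 / η) + η ≤ θ ^ 2 / 16 := by
  set x := θ ^ 2 / 32 with hx
  have hx₀ : 0 < x := by positivity
  have hθsq : θ ^ 2 ≤ θ := pow_le_of_le_one hθ.le hθ₁ two_ne_zero
  refine ⟨x ^ 2, by positivity, ?_, ?_⟩
  · linarith [pow_le_of_le_one hx₀.le (by linarith : x ≤ 1) two_ne_zero]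
  calc x ^ 2 * Real.log (1 / x ^ 2) + x ^ 2 = x ^ 2 * (2 * Real.log (1 / x)) + x ^ 2 := by
        rw [← one_div_pow, Real.log_pow]
        norm_num
    _ ≤ x ^ 2 * (2 * (1 / x - 1)) + x ^ 2 := by
        gcongr
        exact Real.log_le_sub_one_of_pos (by positivity)
    _ = 2 * x - x ^ 2 := by
        field_simp
        ring
    _ ≤ θ ^ 2 / 16 := by linarith [sq_nonneg x]

lemma eventually_log_add_le_mul_sqrt {c : ℝ} (hc : 0 < c) (b : ℝ) :
    ∀ᶠ x : ℝ in atTop, Real.log x + b ≤ c * √x := by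
  have hlog := (isLittleO_log_rpow_atTop (r := 1 / 2) (by norm_num)).bound (half_pos hc)
  have hsqrt := Real.tendsto_sqrt_atTop.eventually_ge_atTop (2 * b / c)
  filter_upwards [hlog, hsqrt] with x hlog hsqrt
  rw [← Real.sqrt_eq_rpow, Real.norm_eq_abs, Real.norm_of_nonneg (Real.sqrt_nonneg x)] at hlog
  rw [div_le_iff₀ hc] at hsqrt
  linarith [le_abs_self (Real.log x)]

lemma factorial_mul_succ_mul_four_pow_le {n : ℕ} (hn : 0 < n) :
    (n.factorial * (n + 1) * 4 ^ n : ℝ) ≤ Real.exp (n * (Real.log n + 3)) := by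
  have hn₀ : (0 : ℝ) < n := Nat.cast_pos.2 hn
  have hfactorial : (n.factorial : ℝ) ≤ Real.exp (n * Real.log n) := by
    rw [mul_comm, Real.exp_mul, Real.exp_log hn₀, Real.rpow_natCast]
    exact_mod_cast Nat.factorial_le_pow n
  have hfour : (4 : ℝ) ≤ Real.exp 2 := by
    calc (4 : ℝ) = 2 ^ 2 := by norm_num
      _ ≤ Real.exp 1 ^ 2 := by
          gcongr
          linarith [Real.add_one_le_exp (1 : ℝ)]
      _ = Real.exp 2 := by rw [← Real.exp_nat_mul]; norm_num
  calc (n.factorial * (n + 1) * 4 ^ n : ℝ)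
      ≤ Real.exp (n * Real.log n) * Real.exp n * Real.exp 2 ^ n := by
        gcongr
        exact Real.add_one_le_exp _
    _ = _ := by
        rw [← Real.exp_nat_mul, ← Real.exp_add, ← Real.exp_add]
        ring_nf

lemma tendsto_factorial_mul_exp_neg_mul_sqrt {c : ℝ} (hc : 0 < c) :
    Tendsto (fun n : ℕ => n.factorial * (n + 1) * 4 ^ n * Real.exp (-(c * (n * √n)))) atTop
      (𝓝 0) := by
  refine squeeze_zero' (Eventually.of_forall fun n => by positivity) ?_
    (Real.tendsto_exp_neg_atTop_nhds_zero.comp tendsto_natCast_atTop_atTop)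
  filter_upwards [eventually_gt_atTop 0,
    tendsto_natCast_atTop_atTop.eventually (eventually_log_add_le_mul_sqrt hc 4)] with n hn hlog
  calc _ ≤ Real.exp (n * (Real.log n + 3)) * Real.exp (-(c * (n * √n))) := by
        gcongr
        exact factorial_mul_succ_mul_four_pow_le hn
    _ = Real.exp (n * (Real.log n + 3 - c * √n)) := by
        rw [← Real.exp_add]
        ring_nf
    _ ≤ Real.exp (n * -1) := by
        gcongr
        linarith
    _ = _ := by rw [mul_neg_one, Function.comp_apply]

section EdgeProbability

variable {x p : ℝ}

lemma one_le_mul_sqrt_of_rpow_neg_half_le (hx : 0 < x) (hp : x ^ (-(1 / 2) : ℝ) ≤ p) :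
    1 ≤ p * √x := by
  rwa [Real.rpow_neg hx.le, ← Real.sqrt_eq_rpow, inv_le_iff_one_le_mul₀ (Real.sqrt_pos.2 hx)] at hp

lemma one_le_mul_sq_of_rpow_neg_half_le (hx : 0 < x) (hp : x ^ (-(1 / 2) : ℝ) ≤ p) :
    1 ≤ x * p ^ 2 := by
  calc (1 : ℝ) ≤ (p * √x) ^ 2 := one_le_pow₀ (one_le_mul_sqrt_of_rpow_neg_half_le hx hp)
    _ = x * p ^ 2 := by rw [mul_pow, Real.sq_sqrt hx.le, mul_comm]

lemma mul_sqrt_le_mul_sq_of_rpow_neg_half_le (hx : 0 < x) (hp : x ^ (-(1 / 2) : ℝ) ≤ p) :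
    x * √x ≤ p * x ^ 2 := by
  calc x * √x ≤ x * √x * (p * √x) :=
        le_mul_of_one_le_right (by positivity) (one_le_mul_sqrt_of_rpow_neg_half_le hx hp)
    _ = p * x * √x ^ 2 := by ring
    _ = p * x ^ 2 := by rw [Real.sq_sqrt hx.le]; ring

end EdgeProbability

lemma eventually_factorial_mul_exp_neg_mul_lt {c ζ : ℝ} (hc : 0 < c) (hζ : 0 < ζ) :
    ∀ᶠ n : ℕ in atTop, ∀ p : ℝ, (n : ℝ) ^ (-(1 / 2) : ℝ) ≤ p →
      n.factorial * (n + 1) * 4 ^ n * Real.exp (-(c * (p * n ^ 2))) < ζ := by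
  filter_upwards [(tendsto_factorial_mul_exp_neg_mul_sqrt hc).eventually_lt_const hζ,
    eventually_gt_atTop 0] with n hlt hn p hp
  have hexponent := mul_sqrt_le_mul_sq_of_rpow_neg_half_le (Nat.cast_pos.2 hn) hp
  exact (mul_le_mul_of_nonneg_left (Real.exp_le_exp.2 (neg_le_neg
    (mul_le_mul_of_nonneg_left hexponent hc.le))) (by positivity)).trans_lt hlt

lemma eventually_four_pow_mul_exp_neg_mul_lt {c ζ : ℝ} (hc : 0 < c) (hζ : 0 < ζ) :
    ∀ᶠ n : ℕ in atTop, ∀ p : ℝ, (n : ℝ) ^ (-(1 / 2) : ℝ) ≤ p →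
      4 ^ n * (2 * Real.exp (-(c * (p * n ^ 2)))) < ζ := by
  filter_upwards [eventually_factorial_mul_exp_neg_mul_lt hc (half_pos hζ)] with n h p hp
  have hcoeff : (1 : ℝ) ≤ n.factorial * (n + 1) :=
    mod_cast Nat.mul_pos n.factorial_pos n.succ_pos
  calc 4 ^ n * (2 * Real.exp (-(c * (p * n ^ 2))))
      = 2 * (1 * 4 ^ n * Real.exp (-(c * (p * n ^ 2)))) := by ring
    _ ≤ 2 * (n.factorial * (n + 1) * 4 ^ n * Real.exp (-(c * (p * n ^ 2)))) := by gcongr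
    _ < ζ := by linarith [h p hp]

lemma eventually_factorial_mul_add_lt {a b ζ : ℝ} (ha : 0 < a) (hb : 0 < b) (hζ : 0 < ζ) :
    ∀ᶠ n : ℕ in atTop, ∀ p : ℝ, (n : ℝ) ^ (-(1 / 2) : ℝ) ≤ p →
      n.factorial * (4 ^ n * (2 * Real.exp (-(a * (p * n ^ 2)))) +
        (n + 1) * 4 ^ n * (2 * Real.exp (-(b * (p * n ^ 2))))) < ζ := by
  filter_upwards [eventually_factorial_mul_exp_neg_mul_lt ha (by positivity : 0 < ζ / 4),
    eventually_factorial_mul_exp_neg_mul_lt hb (by positivity : 0 < ζ / 4)] with n ha hb p hp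
  have hcoeff : (1 : ℝ) ≤ n + 1 := mod_cast n.succ_pos
  calc _ ≤ n.factorial * ((n + 1) * 4 ^ n * (2 * Real.exp (-(a * (p * n ^ 2)))) +
          (n + 1) * 4 ^ n * (2 * Real.exp (-(b * (p * n ^ 2))))) := by
        gcongr
        exact le_mul_of_one_le_left (by positivity) hcoeff
    _ < ζ := by linarith [ha p hp, hb p hp]

end Estimates

/-! ### The random graph and its relabelings -/

section RandomGraph

open scoped Finset

lemma edgeSet_fromEdgeSet_of_subset {V : Type*} [Fintype V] [DecidableEq V] {T : Finset (Sym2 V)}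
    (hT : T ⊆ (⊤ : SimpleGraph V).edgeFinset) :
    (SimpleGraph.fromEdgeSet (T : Set (Sym2 V))).edgeSet = T := by
  rw [SimpleGraph.edgeSet_fromEdgeSet, sdiff_eq_left, Set.disjoint_left]
  exact fun e he => SimpleGraph.not_isDiag_of_mem_edgeFinset (hT he)

variable {n : ℕ} [NeZero n] {p τ η θ : ℝ}

lemma gnpProbZMod_eq_bernProb (n : ℕ) [NeZero n] (p : ℝ) (P : SimpleGraph (ZMod n) → Prop) :
    gnpProbZMod n p P = bernProb p (⊤ : SimpleGraph (ZMod n)).edgeFinset fun T =>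
      P (SimpleGraph.fromEdgeSet (T : Set (Sym2 (ZMod n)))) := by
  rw [gnpProbZMod, dif_neg (NeZero.ne n), bernProb_eq_sum, Finset.sum_filter]
  refine Finset.sum_bij' (fun G _ => G.edgeFinset) (fun T _ => SimpleGraph.fromEdgeSet ↑T)
    ?_ ?_ ?_ ?_ ?_
  · exact fun G _ => Finset.mem_powerset.2 (SimpleGraph.edgeFinset_mono le_top)
  · exact fun T _ => Finset.mem_univ _
  · intro G _
    rw [SimpleGraph.coe_edgeFinset, SimpleGraph.fromEdgeSet_edgeSet]
  · intro T hT
    rw [← Finset.coe_inj, SimpleGraph.coe_edgeFinset,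
      edgeSet_fromEdgeSet_of_subset (Finset.mem_powerset.1 hT)]
  · intro G _
    rw [SimpleGraph.coe_edgeFinset, SimpleGraph.fromEdgeSet_edgeSet, bernWeight,
      Finset.card_sdiff_of_subset (SimpleGraph.edgeFinset_mono le_top),
      SimpleGraph.card_edgeFinset_top_eq_card_choose_two, ZMod.card,
      ← SimpleGraph.coe_edgeFinset, Set.ncard_coe_finset]

lemma bernProb_exists_map_le (hp : 0 ≤ p) (hp₁ : p ≤ 1) {V : Type*} [Fintype V] [DecidableEq V]
    (P : Finset (Sym2 V) → Prop) :
    bernProb p (⊤ : SimpleGraph V).edgeFinset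
        (fun T => ∃ σ : V ≃ V, P (T.map σ.toEmbedding.sym2Map)) ≤
      (Fintype.card V).factorial * bernProb p (⊤ : SimpleGraph V).edgeFinset P := by
  have htop (σ : V ≃ V) : (⊤ : SimpleGraph V).edgeFinset.map σ.toEmbedding.sym2Map =
      (⊤ : SimpleGraph V).edgeFinset := by
    refine Finset.map_eq_of_subset fun e he => ?_
    obtain ⟨e, he', rfl⟩ := Finset.mem_map.1 he
    rw [SimpleGraph.mem_edgeFinset, SimpleGraph.edgeSet_top] at he' ⊢
    exact fun h => he' ((Sym2.isDiag_map σ.injective).1 h)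
  calc _ = bernProb p (⊤ : SimpleGraph V).edgeFinset
          (fun T => ∃ σ ∈ (Finset.univ : Finset (V ≃ V)), P (T.map σ.toEmbedding.sym2Map)) := by
        simp only [Finset.mem_univ, true_and]
    _ ≤ ∑ σ : V ≃ V, bernProb p (⊤ : SimpleGraph V).edgeFinset
          (fun T => P (T.map σ.toEmbedding.sym2Map)) := bernProb_exists_mem_le hp hp₁ _ _
    _ = ∑ _σ : V ≃ V, bernProb p (⊤ : SimpleGraph V).edgeFinset P := by
        simp only [← bernProb_map, htop]
    _ = _ := by
        rw [Finset.sum_const, nsmul_eq_mul, Finset.card_univ, Fintype.card_equiv (Equiv.refl V)]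

lemma bernProb_not_isTypical_le (hp : 0 ≤ p) (hp₁ : p ≤ 1) (hτ : 0 < τ) (hτ₁ : τ ≤ 1) (hη : 0 < η)
    (hη₁ : η ≤ 1) (hθ : 0 < θ) (hθ₁ : θ ≤ 1) (hηθ : η * Real.log (1 / η) + η ≤ θ ^ 2 / 16) :
    bernProb p (⊤ : SimpleGraph (ZMod n)).edgeFinset (fun T => ¬IsTypical p τ η θ T) ≤
      4 ^ n * (2 * Real.exp (-(τ ^ 2 / 8 * (p * n ^ 2)))) +
        (n + 1) * 4 ^ n * (2 * Real.exp (-(θ ^ 2 / 16 * (p * n ^ 2)))) := by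
  have hM : (pairCount (⊤ : SimpleGraph (ZMod n)).edgeFinset Finset.univ : ℝ) ≤ n ^ 2 := by
    rw [pairCount_top_univ (ZMod.card n)]
    exact sub_le_self _ n.cast_nonneg
  have hcardE : (#(⊤ : SimpleGraph (ZMod n)).edgeFinset : ℝ) ≤ n ^ 2 := by
    rw [SimpleGraph.card_edgeFinset_top_eq_card_choose_two, ZMod.card]
    exact_mod_cast Nat.choose_le_pow n 2
  have hsample := bernProb_not_isSample_le hp hp₁ hM hτ (hτ₁.trans one_le_two)
  have hsparse := bernProb_exists_sparse_le hp hp₁ hη hη₁ (m := η * (p * n ^ 2)) hM hθ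
    (hθ₁.trans one_le_two)
    (Finset.range (n + 1) ×ˢ (Finset.univ : Finset (Finset (ZMod n) × Finset (ZMod n))))
    fun S i => openPairs (fun x y => s(x, y) ∈ S) i.1 i.2.1 i.2.2
  have hcardI : (#(Finset.range (n + 1) ×ˢ
      (Finset.univ : Finset (Finset (ZMod n) × Finset (ZMod n)))) : ℝ) = (n + 1) * 4 ^ n := by
    rw [Finset.card_product, Finset.card_range, Finset.card_univ, Fintype.card_prod,
      Fintype.card_finset, ZMod.card, ← mul_pow]
    push_cast
    norm_num
  have hexp : η * (p * n ^ 2) * Real.log (1 / η) + η * p * #(⊤ : SimpleGraph (ZMod n)).edgeFinset -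
      θ ^ 2 / 8 * (p * n ^ 2) ≤ -(θ ^ 2 / 16 * (p * n ^ 2)) := by
    have := mul_le_mul_of_nonneg_left hcardE (mul_nonneg hη.le hp)
    have := mul_le_mul_of_nonneg_right hηθ (by positivity : 0 ≤ p * (n : ℝ) ^ 2)
    linarith
  rw [ZMod.card] at hsample
  rw [hcardI] at hsparse
  calc _ ≤ _ := bernProb_mono hp hp₁ fun T _ hT => ?_
    _ ≤ _ := bernProb_or_le hp hp₁ _ _
    _ ≤ _ := add_le_add hsample (hsparse.trans (by gcongr))
  by_contra! h
  refine hT ⟨h.1, fun S hS hcard l hl X J => ?_⟩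
  exact h.2 S hS hcard (l, X, J) (by simpa [Nat.lt_succ_iff] using hl)

lemma bernProb_not_forall_isTypical_le {K : ℝ} (hp : 0 < p) (hp₁ : p ≤ 1) (hnp : 1 ≤ n * p ^ 2)
    (hK : 0 < K) (hτ : 0 < τ) (hτ₁ : τ ≤ 1) (hη : 0 < η) (hη₁ : η ≤ 1) (hθ : 0 < θ) (hθ₁ : θ ≤ 1)
    (hηθ : η * Real.log (1 / η) + η ≤ θ ^ 2 / 16) :
    bernProb p (⊤ : SimpleGraph (ZMod n)).edgeFinset (fun T =>
        ¬((∀ σ : ZMod n ≃ ZMod n, IsTypical p τ η θ (T.map σ.toEmbedding.sym2Map)) ∧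
          codegreeEnergy (edgeIndicator T) ≤ K * (p * n) ^ 4)) ≤
      n.factorial * (4 ^ n * (2 * Real.exp (-(τ ^ 2 / 8 * (p * n ^ 2)))) +
        (n + 1) * 4 ^ n * (2 * Real.exp (-(θ ^ 2 / 16 * (p * n ^ 2))))) + 4 / K := by
  have henergy := bernProb_le_codegreeEnergy_le hp hp₁
    (E := (⊤ : SimpleGraph (ZMod n)).edgeFinset)
    (fun _ => SimpleGraph.not_isDiag_of_mem_edgeFinset) hK (by rwa [ZMod.card])
  have htypical := bernProb_exists_map_le hp.le hp₁ fun T : Finset (Sym2 (ZMod n)) =>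
    ¬IsTypical p τ η θ T
  rw [ZMod.card] at henergy htypical
  calc _ ≤ _ := bernProb_mono hp.le hp₁ fun T _ hT => ?_
    _ ≤ _ := bernProb_or_le hp.le hp₁ _ _
    _ ≤ _ := add_le_add (htypical.trans (mul_le_mul_of_nonneg_left
      (bernProb_not_isTypical_le hp.le hp₁ hτ hτ₁ hη hη₁ hθ hθ₁ hηθ) (by positivity))) henergy
  rw [not_and_or, not_forall, not_le] at hT
  exact hT.imp_right le_of_lt

lemma exists_forall_isTypical_satisfiesPdelta {ε : ℝ} (hε : 0 < ε) (hε₁ : ε ≤ 1 / 4) :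
    ∃ δ > (0 : ℝ), ∃ θ > (0 : ℝ), θ ≤ 1 ∧ ∃ η > (0 : ℝ), η ≤ 1 ∧
      η * Real.log (1 / η) + η ≤ θ ^ 2 / 16 ∧ ∀ K > (0 : ℝ), ∃ τ > (0 : ℝ), τ ≤ 1 ∧
      ∀ᶠ n : ℕ in atTop, ∀ [NeZero n] (p : ℝ) (T : Finset (Sym2 (ZMod n)))
        (G' : SimpleGraph (ZMod n)), 0 < p →
        4 ^ n * (2 * Real.exp (-(τ ^ 2 / 16 * η * (p * n ^ 2)))) < 1 →
        (∀ σ : ZMod n ≃ ZMod n, IsTypical p τ η θ (T.map σ.toEmbedding.sym2Map)) →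
        codegreeEnergy (edgeIndicator T) ≤ K * (p * n) ^ 4 →
        G'.edgeFinset ⊆ T → (1 / 2 + 2 * ε) * #T ≤ #G'.edgeFinset → SatisfiesPdelta δ G' := by
  obtain ⟨δ, hδ, θ, hθ, hθ₁, h⟩ := exists_forall_isTypical_containsShortcut hε hε₁
  obtain ⟨η, hη, hηθ, hηlog⟩ := exists_sample_rate (half_pos hθ) (by linarith)
  refine ⟨δ, hδ, θ / 2, half_pos hθ, by linarith, η, hη, by linarith, hηlog, fun K hK => ?_⟩
  obtain ⟨τ, hτ, hτ₁, h⟩ := h η hη (by linarith) K hK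
  refine ⟨τ, hτ, hτ₁, ?_⟩
  filter_upwards [h] with n h _ p T G' hp hsmall hT hK hG' hcard σ l hl
  refine h p (T.map σ.toEmbedding.sym2Map) _ hp hsmall (hT σ)
    (by rwa [codegreeEnergy_edgeIndicator_map]) ?_ ?_ l hl
  · rw [SimpleGraph.edgeFinset_map]
    exact Finset.map_subset_map.2 hG'
  · rwa [SimpleGraph.card_edgeFinset_map, Finset.card_map]

lemma gnpProbZMod_le_one (hp : 0 ≤ p) (hp₁ : p ≤ 1) (P : SimpleGraph (ZMod n) → Prop) :
    gnpProbZMod n p P ≤ 1 := by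
  rw [gnpProbZMod_eq_bernProb, bernProb_eq_one_sub]
  exact sub_le_self _ (bernProb_nonneg hp hp₁ _ _)

lemma gnpProbZMod_mono (hp : 0 ≤ p) (hp₁ : p ≤ 1) {P Q : SimpleGraph (ZMod n) → Prop}
    (h : ∀ G, P G → Q G) : gnpProbZMod n p P ≤ gnpProbZMod n p Q := by
  rw [gnpProbZMod_eq_bernProb, gnpProbZMod_eq_bernProb]
  exact bernProb_mono hp hp₁ fun T _ => h _

lemma exists_forall_eventually_one_sub_le_gnpProbZMod {ε : ℝ} (hε : 0 < ε) (hε₁ : ε ≤ 1 / 4) :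
    ∃ δ > (0 : ℝ), ∀ ζ > (0 : ℝ), ∀ᶠ n : ℕ in atTop, ∀ p : ℝ,
      (n : ℝ) ^ (-(1 / 2) : ℝ) ≤ p → p ≤ 1 →
      1 - ζ ≤ gnpProbZMod n p fun G => ∀ G' ≤ G,
        (1 / 2 + 2 * ε) * G.edgeSet.ncard ≤ G'.edgeSet.ncard → SatisfiesPdelta δ G' := by
  obtain ⟨δ, hδ, θ, hθ, hθ₁, η, hη, hη₁, hηθ, h⟩ := exists_forall_isTypical_satisfiesPdelta hε hε₁
  refine ⟨δ, hδ, fun ζ hζ => ?_⟩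
  obtain ⟨τ, hτ, hτ₁, h⟩ := h (8 / ζ) (by positivity)
  filter_upwards [h, eventually_gt_atTop 0,
    eventually_four_pow_mul_exp_neg_mul_lt (by positivity : 0 < τ ^ 2 / 16 * η) one_pos,
    eventually_factorial_mul_add_lt (by positivity : 0 < τ ^ 2 / 8)
      (by positivity : 0 < θ ^ 2 / 16) (half_pos hζ)] with n h hn hsmall hbad p hp hp₁
  have : NeZero n := ⟨hn.ne'⟩
  have hn₀ : (0 : ℝ) < n := Nat.cast_pos.2 hn
  have hp₀ : 0 < p := (Real.rpow_pos_of_pos hn₀ _).trans_le hp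
  have hfail := bernProb_not_forall_isTypical_le hp₀ hp₁
    (one_le_mul_sq_of_rpow_neg_half_le hn₀ hp) (by positivity : 0 < 8 / ζ) hτ hτ₁ hη hη₁ hθ hθ₁ hηθ
  rw [gnpProbZMod_eq_bernProb, bernProb_eq_one_sub]
  refine sub_le_sub_left ((bernProb_mono hp₀.le hp₁ fun T hT => mt ?_).trans
    (hfail.trans (by linarith [hbad p hp, div_div_eq_mul_div 4 8 ζ]))) 1
  rintro ⟨htypical, henergy⟩ G' hG' hcard
  rw [edgeSet_fromEdgeSet_of_subset hT, Set.ncard_coe_finset, ← SimpleGraph.coe_edgeFinset,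
    Set.ncard_coe_finset] at hcard
  refine h p T G' hp₀ (hsmall p hp) htypical henergy ?_ hcard
  rwa [← Finset.coe_subset, SimpleGraph.coe_edgeFinset, ← edgeSet_fromEdgeSet_of_subset hT,
    SimpleGraph.edgeSet_subset_edgeSet]

end RandomGraph

theorem aas_Pdelta_general (ε : ℝ) (hε : 0 < ε) :
    ∃ δ > (0 : ℝ), ∀ p : ℕ → ℝ,
      (∀ᶠ n : ℕ in atTop, (n : ℝ) ^ (-(1 / 2) : ℝ) ≤ p n ∧ p n ≤ 1) →
      Tendsto
        (fun n : ℕ => gnpProbZMod n (p n) (fun G =>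
          ∀ G' : SimpleGraph (ZMod n), G' ≤ G →
            (1 / 2 + ε) * (G.edgeSet.ncard : ℝ) < (G'.edgeSet.ncard : ℝ) →
            SatisfiesPdelta δ G'))
        atTop (𝓝 1) := by
  obtain ⟨δ, hδ, h⟩ := exists_forall_eventually_one_sub_le_gnpProbZMod
    (ε := min ε (1 / 2) / 2) (by positivity) (by linarith [min_le_right ε (1 / 2)])
  refine ⟨δ, hδ, fun p hp => ?_⟩
  have hbounds : ∀ᶠ n : ℕ in atTop, n ≠ 0 ∧ 0 ≤ p n ∧ p n ≤ 1 := by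
    filter_upwards [hp, eventually_ne_atTop 0] with n ⟨hpn, hp₁⟩ hn
    exact ⟨hn, (Real.rpow_nonneg n.cast_nonneg _).trans hpn, hp₁⟩
  refine tendsto_order.2 ⟨fun a ha => ?_, fun a ha => ?_⟩
  · filter_upwards [h ((1 - a) / 2) (by linarith), hp, hbounds] with n h ⟨hpn, _⟩ ⟨hn, hp₀, hp₁⟩
    have : NeZero n := ⟨hn⟩
    refine (by linarith : a < 1 - (1 - a) / 2).trans_le ((h _ hpn hp₁).trans
      (gnpProbZMod_mono hp₀ hp₁ fun G hG G' hG' hcard => hG G' hG' (le_trans ?_ hcard.le)))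
    gcongr
    linarith [min_le_left ε (1 / 2)]
  · filter_upwards [hbounds] with n ⟨hn, hp₀, hp₁⟩
    have : NeZero n := ⟨hn⟩
    exact (gnpProbZMod_le_one hp₀ hp₁ _).trans_lt ha

/-- For every ε > 0 there are δ, C > 0 such that if C·n^(-1/2) ≤ p(n) ≤ n^(-1/3), then
a.a.s. every subgraph G' of G(n,p) with more than (1/2 + ε)·e(G(n,p)) edges satisfies P_δ. -/
theorem aas_Pdelta (ε : ℝ) (hε : 0 < ε) :
    ∃ δ C : ℝ, 0 < δ ∧ 0 < C ∧ ∀ p : ℕ → ℝ,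
      (∀ n : ℕ, C * (n : ℝ) ^ (-(1/2) : ℝ) ≤ p n ∧ p n ≤ (n : ℝ) ^ (-(1/3) : ℝ)) →
      Filter.Tendsto
        (fun n : ℕ => gnpProbZMod n (p n) (fun G =>
          ∀ G' : SimpleGraph (ZMod n), G' ≤ G →
            (1/2 + ε) * (G.edgeSet.ncard : ℝ) < (G'.edgeSet.ncard : ℝ) →
            SatisfiesPdelta δ G'))
        Filter.atTop (nhds 1) := by
  obtain ⟨δ, hδ, h⟩ := aas_Pdelta_general ε hε
  refine ⟨δ, 1, hδ, one_pos, fun p hp => h p ?_⟩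
  filter_upwards [eventually_ge_atTop 1] with n hn
  have hp₁ : (n : ℝ) ^ (-(1 / 3) : ℝ) ≤ 1 :=
    Real.rpow_le_one_of_one_le_of_nonpos (mod_cast hn) (by norm_num)
  exact ⟨by simpa only [one_mul] using (hp n).1, (hp n).2.trans hp₁⟩
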